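/- For any triple (M,R,I), where R is a finitely generated ℕ-graded algebra over a field k of characteristic p > 0, I ⊆ R is a homogeneous ideal with R/I of finite length, and M is a finitely generated ℤ-graded R-module, the sequence of functions F_n(M,R,I,dim M) converges at every complex number y; moreover the convergence is uniform on every compact subset of the complex plane, and the limit function is entire (holomorphic on all of ℂ). -/

import Mathlib

open Filter Complex

noncomputable section

/-- The Frobenius bracket power `I^{[q]}` of an ideal: the ideal generated by
`q`-th powers of elements of `I`. -/
def bracketPow {R : Type*} [CommSemiring R] (I : Ideal R) (q : ℕ) : Ideal R :=
  Ideal.span ((fun x : R => x ^ q) '' (I : Set R))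

/-- The dimension over `k` of the image of the degree-`j` graded piece `ℳ j` in the
quotient `M ⧸ N`, i.e. `λ_k((M/N)_j)` when `N` is a graded submodule. -/
def quotPieceDim (k : Type*) {R M : Type*} [Field k] [CommRing R] [Algebra k R]
    [AddCommGroup M] [Module R M] [Module k M] [IsScalarTower k R M]
    (ℳ : ℤ → Submodule k M) (N : Submodule R M) (j : ℤ) : ℕ :=
  Module.finrank k ((ℳ j).map (N.mkQ.restrictScalars k))

/-- `F_n(M,R,I,d)(y) = p^{-nd} Σ_{j∈ℤ} λ_k((M/I^{[p^n]}M)_j) e^{-iyj/p^n}`. -/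
def FnGen (k : Type*) {R M : Type*} [Field k] [CommRing R] [Algebra k R]
    [AddCommGroup M] [Module R M] [Module k M] [IsScalarTower k R M]
    (ℳ : ℤ → Submodule k M) (I : Ideal R) (p d n : ℕ) (y : ℂ) : ℂ :=
  (1 / (p : ℂ) ^ n) ^ d *
    ∑' j : ℤ, (quotPieceDim k (R := R) ℳ (bracketPow I (p ^ n) • ⊤) j : ℂ) *
      Complex.exp (-Complex.I * y * (j : ℂ) / (p : ℂ) ^ n)

/-!
`F_n` is the normalised Fourier transform of the Hilbert function `h_n` of `M / I^{[p^n]} M`, with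
the mass `h_n j` placed at the point `j / p^n`; these points stay in a fixed compact set. Suppose
that `h_{n+1}` exceeds the sum of `p^d` copies of `h_n`, moved along maps `j ↦ p * j + w_a`, by a
total mass of only `O(p^{n(d-1)})`. Then the normalised masses are almost decreasing, so the defect
in the other direction is summable too, and the `F_n` are Cauchy uniformly on compact sets; the
limit is entire by Weierstrass.

Dividing by the annihilator of `M` and choosing homogeneous parameters makes `R` finite over a
polynomial ring `A = k[x_1, …, x_d]` with `d = dim M`. The ranks over `A` of the subalgebras
`A[R^{p^e}]` stabilise, so for one of them, `B`, some nonzero `f ∈ A` maps `B` into the `A`-span of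
its `p`-th powers. As `I^{[p^n]}` is generated by elements of `B` for `n ≥ e`, we may replace `R`
by `B`. For a sequence of ideals `𝔟_n` of `B` in place of `I^{[p^n]}`, the products `x^a * b^p` with
`0 ≤ a_i < p` then span `B / 𝔟_{n+1}` up to a quotient killed by `f`, and such quotients have length
`O(p^{n(d-1)})`. This is the recursion above for cyclic modules. In general, adjoining a homogeneous
`m` of degree `μ` to a graded submodule `N` of `M` adds, up to a negligible error, the Hilbert
functions of `B / ((N : m) + 𝔟_n)` shifted by `μ`.
-/

section RelLength

/-- The length of `(U + W) / W`, the relative length of `U` over `W`.  Neither submodule is assumed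
to contain the other. -/
def relLength {R M : Type*} [Ring R] [AddCommGroup M] [Module R M] (U W : Submodule R M) : ℕ∞ :=
  Module.length R (U.map W.mkQ)

section Ring

variable {R M N : Type*} [Ring R] [AddCommGroup M] [Module R M] [AddCommGroup N] [Module R N]

lemma relLength_mono_left {U U' : Submodule R M} (W : Submodule R M) (h : U ≤ U') :
    relLength U W ≤ relLength U' W :=
  Module.length_le_of_injective (Submodule.inclusion (Submodule.map_mono h))
    (Submodule.inclusion_injective _)

lemma relLength_top_left (W : Submodule R M) : relLength ⊤ W = Module.length R (M ⧸ W) := by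
  rw [relLength, Submodule.map_top, Submodule.range_mkQ, Module.length_top]

lemma relLength_map_left (φ : M →ₗ[R] N) (U : Submodule R M) (W : Submodule R N) :
    relLength (U.map φ) W = relLength U (W.comap φ) := by
  have hinj : Function.Injective (Submodule.mapQ (W.comap φ) W φ le_rfl) := by
    simp [← LinearMap.ker_eq_bot, Submodule.ker_mapQ]
  rw [relLength, relLength, (Submodule.equivMapOfInjective _ hinj _).length_eq,
    ← Submodule.map_comp, ← Submodule.map_comp, Submodule.mapQ_mkQ]

lemma relLength_le_of_inf_le {U W W' : Submodule R M} (h : U ⊓ W' ≤ W) :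
    relLength U W ≤ relLength U W' := by
  have h_eq (X : Submodule R M) : relLength U X = relLength ⊤ (X.comap U.subtype) := by
    rw [← relLength_map_left, Submodule.map_top, Submodule.range_subtype]
  have hle : W'.comap U.subtype ≤ W.comap U.subtype := fun x hx => h ⟨x.2, hx⟩
  rw [h_eq, h_eq, relLength_top_left, relLength_top_left]
  exact Module.length_le_of_surjective (Submodule.factor hle) (Submodule.factor_surjective hle)

lemma relLength_anti_right (U : Submodule R M) {W W' : Submodule R M} (h : W' ≤ W) :
    relLength U W ≤ relLength U W' :=
  relLength_le_of_inf_le (inf_le_right.trans h)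

lemma relLength_le_length (U W : Submodule R M) : relLength U W ≤ Module.length R U :=
  Module.length_le_of_surjective (W.mkQ.submoduleMap U) (LinearMap.submoduleMap_surjective _ _)

lemma map_mkQ_eq_bot_iff (U W : Submodule R M) : U.map W.mkQ = ⊥ ↔ U ≤ W := by
  rw [eq_bot_iff, Submodule.map_le_iff_le_comap, ← LinearMap.ker, Submodule.ker_mkQ]

lemma relLength_eq_zero_iff {U W : Submodule R M} : relLength U W = 0 ↔ U ≤ W := by
  rw [relLength, Module.length_eq_zero_iff, Submodule.subsingleton_iff_eq_bot, map_mkQ_eq_bot_iff]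

lemma relLength_eq_add {U' U : Submodule R M} (W : Submodule R M) (h : U' ≤ U) :
    relLength U W = relLength U' W + relLength U (U' ⊔ W) := by
  have hW : W ≤ U' ⊔ W := le_sup_right
  let g := (Submodule.factor hW).restrict (p := U.map W.mkQ) (q := U.map (U' ⊔ W).mkQ) (by
    rintro _ ⟨u, hu, rfl⟩
    exact ⟨u, hu, rfl⟩)
  refine Module.length_eq_add_of_exact (Submodule.inclusion (Submodule.map_mono h)) g
    (Submodule.inclusion_injective _) ?_ ?_
  · rintro ⟨_, u, hu, rfl⟩
    exact ⟨⟨W.mkQ u, u, hu, rfl⟩, rfl⟩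
  rintro ⟨_, u, hu, rfl⟩
  have hg : g ⟨W.mkQ u, u, hu, rfl⟩ = 0 ↔ u ∈ U' ⊔ W := by
    rw [Subtype.ext_iff]
    exact Submodule.Quotient.mk_eq_zero _
  have hrange : u ∈ U' ⊔ W ↔ W.mkQ u ∈ U'.map W.mkQ := by
    rw [← Submodule.mem_comap, Submodule.comap_map_mkQ, sup_comm]
  rw [hg, hrange]
  refine ⟨fun hu' => ⟨⟨_, hu'⟩, rfl⟩, ?_⟩
  rintro ⟨⟨v, hv⟩, huv⟩
  obtain rfl : v = W.mkQ u := congrArg Subtype.val huv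
  exact hv

lemma relLength_sup_le (U U' W : Submodule R M) :
    relLength (U ⊔ U') W ≤ relLength U W + relLength U' W := by
  rw [relLength_eq_add W (le_sup_left : U ≤ U ⊔ U')]
  gcongr
  have h : relLength (U ⊔ U') (U ⊔ W) = relLength U' (U ⊔ W) := by
    rw [relLength, relLength, Submodule.map_sup, (map_mkQ_eq_bot_iff ..).2 le_sup_left,
      bot_sup_eq]
  exact h.trans_le (relLength_anti_right U' le_sup_right)

lemma relLength_finset_sup_le {ι : Type*} (s : Finset ι) (U : ι → Submodule R M)
    (W : Submodule R M) : relLength (s.sup U) W ≤ ∑ i ∈ s, relLength (U i) W := by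
  classical
  induction s using Finset.induction_on with
  | empty => simp [relLength_eq_zero_iff]
  | insert a s ha ih =>
    rw [Finset.sup_insert, Finset.sum_insert ha]
    exact (relLength_sup_le _ _ _).trans (by gcongr)

lemma relLength_sup_right_self (U W : Submodule R M) : relLength (U ⊔ W) W = relLength U W := by
  refine le_antisymm ?_ (relLength_mono_left _ le_sup_left)
  simpa [relLength_eq_zero_iff.2 le_rfl] using relLength_sup_le U W W

lemma relLength_le_relLength_inf_add (U W W' : Submodule R M) :
    relLength U W ≤ relLength (U ⊓ W') W + relLength U W' := by
  rw [relLength_eq_add W (inf_le_left : U ⊓ W' ≤ U)]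
  gcongr
  exact relLength_le_of_inf_le le_sup_left

lemma relLength_inf_comap_le (s : M →ₗ[R] M) {U W : Submodule R M} (hU : U.map s ≤ U)
    (hW : W.map s ≤ W) (hfin : relLength U W ≠ ⊤) :
    relLength (U ⊓ W.comap s) W ≤ relLength U (U.map s ⊔ W) := by
  have h_image : relLength (U.map s) W ≤ relLength U (U ⊓ W.comap s ⊔ W) := by
    rw [relLength_map_left]
    exact relLength_le_of_inf_le
      (inf_le_right.trans (sup_le inf_le_right (Submodule.map_le_iff_le_comap.1 hW)))
  have h_kernel := relLength_eq_add W (inf_le_left : U ⊓ W.comap s ≤ U)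
  have h_cokernel := relLength_eq_add W hU
  refine (ENat.add_le_add_iff_right (k := relLength U (U ⊓ W.comap s ⊔ W)) fun htop => ?_).1 ?_
  · exact hfin (by rw [h_kernel, htop, add_top])
  · rw [← h_kernel, h_cokernel, add_comm]
    gcongr

end Ring

section Field

variable {k V V' : Type*} [Field k] [AddCommGroup V] [Module k V] [AddCommGroup V'] [Module k V']

lemma relLength_le_card {ι : Type*} [Fintype ι] (v : ι → V) {U W : Submodule k V}
    (h : U ≤ Submodule.span k (Set.range v) ⊔ W) : relLength U W ≤ Fintype.card ι := by
  have : Module.Finite k (Submodule.span k (Set.range v)) :=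
    FiniteDimensional.span_of_finite k (Set.finite_range v)
  calc relLength U W ≤ relLength (Submodule.span k (Set.range v) ⊔ W) W := relLength_mono_left W h
    _ = relLength (Submodule.span k (Set.range v)) W := relLength_sup_right_self _ _
    _ ≤ Module.length k (Submodule.span k (Set.range v)) := relLength_le_length _ _
    _ ≤ Fintype.card ι := by
      rw [Module.length_eq_finrank]
      exact_mod_cast finrank_range_le_card v

lemma exists_le_span_sup_of_relLength_ne_top {U W : Submodule k V} (h : relLength U W ≠ ⊤) :
    ∃ v : Fin (relLength U W).toNat → V, U ≤ Submodule.span k (Set.range v) ⊔ W := by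
  have : Module.Finite k (U.map W.mkQ) := by
    have := (isFiniteLength_iff_isNoetherian_isArtinian.1 (Module.length_ne_top_iff.1 h)).1
    infer_instance
  have hrank : (relLength U W).toNat = Module.finrank k (U.map W.mkQ) := by
    rw [relLength, Module.length_eq_finrank, ENat.toNat_natCast]
  rw [hrank]
  let b := Module.finBasis k (U.map W.mkQ)
  choose v _ hv using fun i => (b i).2
  refine ⟨v, ?_⟩
  have hspan : U.map W.mkQ ≤ (Submodule.span k (Set.range v)).map W.mkQ := by
    have hb : Submodule.span k (Set.range fun i => (b i : V ⧸ W)) = U.map W.mkQ := by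
      have := congrArg (Submodule.map (U.map W.mkQ).subtype) b.span_eq
      rwa [Submodule.map_span, ← Set.range_comp, Submodule.map_top, Submodule.range_subtype] at this
    have hv' : W.mkQ ∘ v = fun i => (b i : V ⧸ W) := funext hv
    rw [Submodule.map_span, ← Set.range_comp, hv']
    exact hb.ge
  rw [sup_comm, ← Submodule.comap_map_mkQ]
  exact Submodule.map_le_iff_le_comap.1 hspan

lemma relLength_span_image_le {σ : k →+* k} (φ : V →ₛₗ[σ] V') (U W : Submodule k V)
    {W' : Submodule k V'} (hW : ∀ w ∈ W, φ w ∈ W') :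
    relLength (Submodule.span k (φ '' U)) W' ≤ relLength U W := by
  by_cases h : relLength U W = ⊤
  · rw [h]; exact le_top
  obtain ⟨v, hle⟩ := exists_le_span_sup_of_relLength_ne_top h
  suffices Submodule.span k (φ '' U) ≤ Submodule.span k (Set.range (φ ∘ v)) ⊔ W' by
    refine (relLength_le_card _ this).trans ?_
    rw [Fintype.card_fin, ENat.natCast_toNat h]
  have hv : Submodule.span k (Set.range v) ⊔ W ≤
      (Submodule.span k (Set.range (φ ∘ v)) ⊔ W').comap φ := by
    refine sup_le (Submodule.span_le.2 ?_) fun w hw => Submodule.mem_sup_right (hW w hw)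
    rintro _ ⟨i, rfl⟩
    exact Submodule.mem_sup_left (Submodule.subset_span ⟨i, rfl⟩)
  rw [Submodule.span_le]
  rintro _ ⟨u, hu, rfl⟩
  exact hv (hle hu)

lemma relLength_span_range_le {S ι : Type*} [CommRing S] [Algebra k S] [Module S V]
    [IsScalarTower k S V] [Fintype ι] (g : ι → V) (𝔮 : Ideal S) {W : Submodule k V}
    (h : ∀ q ∈ 𝔮, ∀ i, q • g i ∈ W) :
    relLength ((Submodule.span S (Set.range g)).restrictScalars k) W ≤
      Fintype.card ι * Module.length k (S ⧸ 𝔮.restrictScalars k) := by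
  let φ (i : ι) : S →ₗ[k] V := (LinearMap.toSpanSingleton S V (g i)).restrictScalars k
  have hle : (Submodule.span S (Set.range g)).restrictScalars k ≤
      Finset.univ.sup fun i => (⊤ : Submodule k S).map (φ i) := by
    intro v hv
    obtain ⟨c, rfl⟩ := (Submodule.mem_span_range_iff_exists_fun S).1 hv
    exact sum_mem fun i hi =>
      Finset.le_sup (f := fun i => (⊤ : Submodule k S).map (φ i)) hi ⟨c i, trivial, rfl⟩
  calc relLength ((Submodule.span S (Set.range g)).restrictScalars k) W
      ≤ ∑ i, relLength ((⊤ : Submodule k S).map (φ i)) W :=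
        (relLength_mono_left W hle).trans (relLength_finset_sup_le _ _ _)
    _ ≤ ∑ _i : ι, Module.length k (S ⧸ 𝔮.restrictScalars k) := by
        gcongr with i
        rw [relLength_map_left, ← relLength_top_left]
        exact relLength_anti_right ⊤ fun q hq => h q hq i
    _ = _ := by simp

end Field

end RelLength

section MonomialBox

variable {σ k : Type*} [Field k]

open MvPolynomial

/-- The ideal of `k[X]` generated by the `N`-th powers of the variables. -/
def varPow (σ k : Type*) [Field k] (N : ℕ) : Ideal (MvPolynomial σ k) :=
  Ideal.span (Set.range fun i => X i ^ N)

lemma monomial_mem_varPow {N : ℕ} {b : σ →₀ ℕ} {i : σ} (hi : N ≤ b i) (c : k) :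
    monomial b c ∈ varPow σ k N := by
  have hb : monomial b c = monomial (b - Finsupp.single i N) c * X i ^ N := by
    rw [X_pow_eq_monomial, monomial_mul, mul_one, tsub_add_cancel_of_le (by simpa using hi)]
  rw [hb]
  exact Ideal.mul_mem_left _ _ (Ideal.subset_span ⟨i, rfl⟩)

variable [Fintype σ]

/-- The exponent vector given by a point of the box `[0, N)^σ`. -/
def boxExponent {N : ℕ} (b : σ → Fin N) : σ →₀ ℕ :=
  Finsupp.equivFunOnFinite.symm fun i => (b i : ℕ)

/-- The monomial `∏ i, X i ^ b i`, with exponents in the box `[0, N)`. -/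
def boxMonomial (k : Type*) [Field k] {N : ℕ} (b : σ → Fin N) : MvPolynomial σ k :=
  monomial (boxExponent b) 1

lemma mem_span_boxMonomial_sup_varPow {N : ℕ} (P : MvPolynomial σ k) (s : Set (σ → Fin N))
    (hs : ∀ b : σ → Fin N, boxExponent b ∈ P.support → b ∈ s) :
    P ∈ Submodule.span k (Set.range fun b : s => boxMonomial k b.1) ⊔
      (varPow σ k N).restrictScalars k := by
  rw [P.as_sum]
  refine sum_mem fun b hb => ?_
  by_cases hbox : ∀ i, b i < N
  · have hb' : b = boxExponent fun i => ⟨b i, hbox i⟩ := by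
      ext; rfl
    have hmon : monomial b (P.coeff b) = P.coeff b • boxMonomial k fun i => ⟨b i, hbox i⟩ := by
      rw [boxMonomial, ← hb', smul_monomial, smul_eq_mul, mul_one]
    rw [hmon]
    exact Submodule.mem_sup_left
      (Submodule.smul_mem _ _ (Submodule.subset_span ⟨⟨_, hs _ (hb' ▸ hb)⟩, rfl⟩))
  · push Not at hbox
    obtain ⟨i, hi⟩ := hbox
    exact Submodule.mem_sup_right (monomial_mem_varPow hi _)

lemma card_box_not_le_mul_le (a : σ → ℕ) (N : ℕ) :
    Nat.card {b : σ → Fin N // ¬ ∀ i, a i ≤ b i} * N ≤ (∑ i, a i) * N ^ Fintype.card σ := by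
  classical
  have h_slab (i : σ) : (Finset.univ.filter fun b : σ → Fin N => b i < a i).card * N ≤
      a i * N ^ Fintype.card σ := by
    let f (x : {b : σ → Fin N // b i < a i} × Fin N) : Fin (a i) × (σ → Fin N) :=
      (⟨x.1.1 i, x.1.2⟩, Function.update x.1.1 i x.2)
    have hf : Function.Injective f := by
      rintro ⟨⟨b, hb⟩, c⟩ ⟨⟨b', hb'⟩, c'⟩ h
      obtain ⟨hi, hu⟩ := Prod.ext_iff.1 h
      have hi : b i = b' i := Fin.ext (by simpa [f] using hi)
      refine Prod.ext (Subtype.ext (funext fun l => ?_)) (by simpa [f] using congrFun hu i)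
      by_cases hl : l = i
      · exact hl ▸ hi
      · simpa [f, Function.update_of_ne hl] using congrFun hu l
    simpa [Fintype.card_subtype] using Fintype.card_le_of_injective f hf
  have h_cover : (Finset.univ.filter fun b : σ → Fin N => ¬ ∀ i, a i ≤ b i) ⊆
      Finset.univ.biUnion fun i => Finset.univ.filter fun b : σ → Fin N => b i < a i := by
    intro b
    simp
  calc Nat.card {b : σ → Fin N // ¬ ∀ i, a i ≤ b i} * N
      ≤ (∑ i, (Finset.univ.filter fun b : σ → Fin N => b i < a i).card) * N := by
        rw [Nat.card_eq_fintype_card, Fintype.card_subtype]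
        gcongr
        exact (Finset.card_le_card h_cover).trans Finset.card_biUnion_le
    _ ≤ (∑ i, a i) * N ^ Fintype.card σ := by
        rw [Finset.sum_mul, Finset.sum_mul]
        exact Finset.sum_le_sum fun i _ => h_slab i

lemma length_quotient_varPow_le (N : ℕ) :
    Module.length k (MvPolynomial σ k ⧸ (varPow σ k N).restrictScalars k) ≤
      (N ^ Fintype.card σ : ℕ) := by
  classical
  rw [← relLength_top_left]
  refine (relLength_le_card (fun b : (Set.univ : Set (σ → Fin N)) => boxMonomial k b.1)
    fun P _ => mem_span_boxMonomial_sup_varPow P _ fun _ _ => trivial).trans ?_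
  simp

-- Division by `f` leaves a remainder without monomials divisible by the leading monomial `X ^ a` of
-- `f`, and the exponents in the box that do not dominate `a` lie in `∑ i, a i` slabs.
lemma exists_length_quotient_mul_le {f : MvPolynomial σ k} (hf : f ≠ 0) : ∃ C : ℕ, ∀ N : ℕ,
    Module.length k (MvPolynomial σ k ⧸ (Ideal.span {f} ⊔ varPow σ k N).restrictScalars k) * N ≤
      (C * N ^ Fintype.card σ : ℕ) := by
  classical
  let _ : LinearOrder σ := LinearOrder.lift' _ (Fintype.equivFin σ).injective
  let a := MonomialOrder.lex.degree f
  refine ⟨∑ i, a i, fun N => ?_⟩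
  let s : Set (σ → Fin N) := {b | ¬ ∀ i, a i ≤ b i}
  have hspan : ⊤ ≤ Submodule.span k (Set.range fun b : s => boxMonomial k b.1) ⊔
      (Ideal.span {f} ⊔ varPow σ k N).restrictScalars k := by
    intro P _
    obtain ⟨g, r, rfl, -, hr⟩ := MonomialOrder.lex.div_single (b := f)
      (IsUnit.mk0 _ (by simpa using hf)) P
    refine add_mem (Submodule.mem_sup_right (Submodule.mem_sup_left ?_)) ?_
    · exact Ideal.mul_mem_left _ _ (Ideal.mem_span_singleton_self f)
    · have h := mem_span_boxMonomial_sup_varPow r s fun b hb => by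
        simpa [s, Finsupp.le_def, a, boxExponent] using hr _ hb
      have hle : (varPow σ k N).restrictScalars k ≤
          (Ideal.span {f} ⊔ varPow σ k N).restrictScalars k :=
        Submodule.restrictScalars_mono k le_sup_right
      exact sup_le_sup_left hle _ h
  have hcard : relLength ⊤ ((Ideal.span {f} ⊔ varPow σ k N).restrictScalars k) ≤ Nat.card s := by
    rw [Nat.card_eq_fintype_card]
    exact relLength_le_card _ hspan
  rw [← relLength_top_left]
  calc _ ≤ (Nat.card s : ℕ∞) * N := by gcongr
    _ ≤ _ := by exact_mod_cast card_box_not_le_mul_le a N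

section FiniteModule

variable {V : Type*} [AddCommGroup V] [Module (MvPolynomial σ k) V] [Module k V]
  [IsScalarTower k (MvPolynomial σ k) V] {N : Submodule (MvPolynomial σ k) V}

omit [Fintype σ] in
lemma relLength_ne_top_of_varPow_smul_mem [Finite σ] (hN : N.FG) {Q : ℕ} {W : Submodule k V}
    (h : ∀ q ∈ varPow σ k Q, ∀ v ∈ N, q • v ∈ W) : relLength (N.restrictScalars k) W ≠ ⊤ := by
  cases nonempty_fintype σ
  obtain ⟨r, g, rfl⟩ := Submodule.fg_iff_exists_fin_generating_family.1 hN
  refine ne_top_of_le_ne_top (ENat.natCast_ne_top (r * Q ^ Fintype.card σ)) ?_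
  refine (relLength_span_range_le g (varPow σ k Q) fun q hq i =>
    h q hq _ (Submodule.subset_span ⟨i, rfl⟩)).trans ?_
  rw [Fintype.card_fin, Nat.cast_mul]
  gcongr
  exact length_quotient_varPow_le Q

lemma exists_relLength_mul_le_of_smul_mem (hN : N.FG) {f : MvPolynomial σ k} (hf : f ≠ 0) :
    ∃ C : ℕ, ∀ (Q : ℕ) (W : Submodule k V), (∀ v ∈ N, f • v ∈ W) →
      (∀ q ∈ varPow σ k Q, ∀ v ∈ N, q • v ∈ W) →
      relLength (N.restrictScalars k) W * Q ≤ (C * Q ^ Fintype.card σ : ℕ) := by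
  obtain ⟨r, g, rfl⟩ := Submodule.fg_iff_exists_fin_generating_family.1 hN
  obtain ⟨C, hC⟩ := exists_length_quotient_mul_le hf
  refine ⟨r * C, fun Q W hfW hQW => ?_⟩
  have hgW : ∀ q ∈ Ideal.span {f} ⊔ varPow σ k Q, ∀ i, q • g i ∈ W := by
    intro q hq i
    have hgi : g i ∈ Submodule.span (MvPolynomial σ k) (Set.range g) :=
      Submodule.subset_span ⟨i, rfl⟩
    obtain ⟨a, ha, b, hb, rfl⟩ := Submodule.mem_sup.1 hq
    obtain ⟨c, rfl⟩ := Ideal.mem_span_singleton'.1 ha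
    rw [add_smul, mul_comm c f, mul_smul]
    exact add_mem (hfW _ (Submodule.smul_mem _ c hgi)) (hQW b hb _ hgi)
  calc _ ≤ (r * Module.length k (MvPolynomial σ k ⧸
          (Ideal.span {f} ⊔ varPow σ k Q).restrictScalars k)) * Q := by
        gcongr
        exact (relLength_span_range_le g _ hgW).trans_eq (by rw [Fintype.card_fin])
    _ ≤ r * (C * Q ^ Fintype.card σ : ℕ) := by
        rw [mul_assoc]
        gcongr
        exact hC Q
    _ = _ := by push_cast; ring

end FiniteModule

end MonomialBox

section Homogeneous

section Decomposition

variable {ι R M σ : Type*} [DecidableEq ι] [Semiring R] [AddCommMonoid M] [Module R M]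
  [SetLike σ M] [AddSubmonoidClass σ M] (ℳ : ι → σ) [DirectSum.Decomposition ℳ]

lemma mem_closure_decompose (x : M) :
    x ∈ AddSubmonoid.closure (Set.range fun i => (DirectSum.decompose ℳ x i : M)) := by
  classical
  have h : ∑ i ∈ (DirectSum.decompose ℳ x).support, (DirectSum.decompose ℳ x i : M) ∈
      AddSubmonoid.closure (Set.range fun i => (DirectSum.decompose ℳ x i : M)) :=
    sum_mem fun i _ => AddSubmonoid.subset_closure (Set.mem_range_self i)
  rwa [DirectSum.sum_support_decompose] at h

variable {ℳ}

lemma isHomogeneous_of_le_closure {N : Submodule R M}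
    (h : ∀ x ∈ N, x ∈ AddSubmonoid.closure {y | y ∈ N ∧ SetLike.IsHomogeneousElem ℳ y}) :
    N.IsHomogeneous ℳ := by
  intro j x hx
  have hcl := h x hx
  clear hx
  induction hcl using AddSubmonoid.closure_induction with
  | mem y hy =>
    obtain ⟨hyN, i, hi⟩ := hy
    by_cases hij : i = j
    · subst hij
      rwa [DirectSum.decompose_of_mem_same ℳ hi]
    · rw [DirectSum.decompose_of_mem_ne ℳ hi hij]
      exact zero_mem N
  | zero => simp
  | add y z _ _ hy hz =>
    rw [DirectSum.decompose_add, DirectSum.add_apply, AddMemClass.coe_add]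
    exact add_mem hy hz

lemma isHomogeneous_sup {N N' : Submodule R M} (h : N.IsHomogeneous ℳ) (h' : N'.IsHomogeneous ℳ) :
    (N ⊔ N').IsHomogeneous ℳ := by
  intro i x hx
  obtain ⟨a, ha, b, hb, rfl⟩ := Submodule.mem_sup.1 hx
  rw [DirectSum.decompose_add, DirectSum.add_apply, AddMemClass.coe_add]
  exact add_mem (Submodule.mem_sup_left (h i ha)) (Submodule.mem_sup_right (h' i hb))

variable (R ℳ) in
lemma exists_finset_homogeneous_span_le (t : Finset M) :
    ∃ s : Finset M, (∀ m ∈ s, SetLike.IsHomogeneousElem ℳ m) ∧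
      Submodule.span R (t : Set M) ≤ Submodule.span R (s : Set M) := by
  classical
  refine ⟨t.biUnion fun m => (DirectSum.decompose ℳ m).support.image
    fun i => (DirectSum.decompose ℳ m i : M), ?_, ?_⟩
  · intro m hm
    simp only [Finset.mem_biUnion, Finset.mem_image] at hm
    obtain ⟨x, -, i, -, rfl⟩ := hm
    exact ⟨i, SetLike.coe_mem _⟩
  · rw [Submodule.span_le]
    intro m hm
    rw [← DirectSum.sum_support_decompose ℳ m]
    exact sum_mem fun i hi => Submodule.subset_span
      (Finset.mem_biUnion.2 ⟨m, hm, Finset.mem_image_of_mem _ hi⟩)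

variable (R ℳ) in
lemma exists_finset_homogeneous_span_eq_top [Module.Finite R M] :
    ∃ s : Finset M, (∀ m ∈ s, SetLike.IsHomogeneousElem ℳ m) ∧
      Submodule.span R (s : Set M) = ⊤ := by
  obtain ⟨t, ht⟩ := Module.Finite.fg_top (R := R) (M := M)
  obtain ⟨s, hs, hts⟩ := exists_finset_homogeneous_span_le R ℳ t
  exact ⟨s, hs, top_le_iff.1 (ht.ge.trans hts)⟩

end Decomposition

section GradedSMul

variable {ι R M σ τ : Type*} [DecidableEq ι] [AddMonoid ι] [Semiring R] [AddCommMonoid M]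
  [Module R M] [SetLike σ R] [AddSubmonoidClass σ R] [SetLike τ M] [AddSubmonoidClass τ M]
  {𝒜 : ι → σ} [GradedRing 𝒜] {ℳ : ι → τ} [DirectSum.Decomposition ℳ] [SetLike.GradedSMul 𝒜 ℳ]

include 𝒜 in
lemma isHomogeneous_span {s : Set M} (hs : ∀ m ∈ s, SetLike.IsHomogeneousElem ℳ m) :
    (Submodule.span R s).IsHomogeneous ℳ := by
  refine isHomogeneous_of_le_closure fun x hx => ?_
  induction hx using Submodule.closure_induction with
  | zero => exact zero_mem _
  | add x y _ _ hx hy => exact add_mem hx hy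
  | smul_mem r m hm =>
    obtain ⟨i, hi⟩ := hs m hm
    have hmap := AddSubmonoid.mem_map_of_mem ((AddMonoidHom.flip (smulAddHom R M)) m)
      (mem_closure_decompose 𝒜 r)
    rw [AddMonoidHom.map_mclosure, ← Set.range_comp] at hmap
    refine AddSubmonoid.closure_mono ?_ hmap
    rintro _ ⟨a, rfl⟩
    exact ⟨Submodule.smul_mem _ _ (Submodule.subset_span hm), a +ᵥ i,
      SetLike.GradedSMul.smul_mem (SetLike.coe_mem _) hi⟩

lemma isHomogeneous_smul {J : Ideal R} {N : Submodule R M} (hJ : J.IsHomogeneous 𝒜)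
    (hN : N.IsHomogeneous ℳ) : (J • N).IsHomogeneous ℳ := by
  classical
  refine isHomogeneous_of_le_closure fun x hx => ?_
  refine Submodule.smul_induction_on hx (fun r hr m hm => ?_) fun x y hx hy => add_mem hx hy
  rw [← DirectSum.sum_support_decompose 𝒜 r, ← DirectSum.sum_support_decompose ℳ m,
    Finset.sum_smul_sum]
  exact sum_mem fun a _ => sum_mem fun b _ => AddSubmonoid.subset_closure
    ⟨Submodule.smul_mem_smul (hJ a hr) (hN b hm), a +ᵥ b,
      SetLike.GradedSMul.smul_mem (SetLike.coe_mem _) (SetLike.coe_mem _)⟩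

end GradedSMul

section Field

variable {ι k V : Type*} [DecidableEq ι] [Field k] [AddCommGroup V] [Module k V]

/-- The projection of a graded vector space to its component of degree `j`. -/
def gradedProj (𝒱 : ι → Submodule k V) [DirectSum.Decomposition 𝒱] (j : ι) : V →ₗ[k] V :=
  (𝒱 j).subtype ∘ₗ DirectSum.component k ι (fun i => 𝒱 i) j ∘ₗ
    (DirectSum.decomposeLinearEquiv 𝒱).toLinearMap

variable {𝒱 : ι → Submodule k V} [DirectSum.Decomposition 𝒱]

lemma gradedProj_of_mem {j : ι} {v : V} (h : v ∈ 𝒱 j) : gradedProj 𝒱 j v = v :=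
  DirectSum.decompose_of_mem_same 𝒱 h

lemma gradedProj_of_mem_ne {i j : ι} {v : V} (h : v ∈ 𝒱 i) (hij : i ≠ j) : gradedProj 𝒱 j v = 0 :=
  DirectSum.decompose_of_mem_ne 𝒱 h hij

lemma inf_sup_le_of_le_ker_gradedProj {W X : Submodule k V} (hW : W.IsHomogeneous 𝒱) {j : ι}
    (hX : X ≤ LinearMap.ker (gradedProj 𝒱 j)) : 𝒱 j ⊓ (X ⊔ W) ≤ W := by
  rintro v ⟨hvj, hv⟩
  obtain ⟨x, hx, w, hw, rfl⟩ := Submodule.mem_sup.1 hv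
  have h := gradedProj_of_mem hvj
  rw [map_add, hX hx, zero_add] at h
  exact h ▸ hW j hw

lemma graded_le_of_top_le_span_sup {α : Type*} {v : α → V} {γ : α → ι} (hv : ∀ a, v a ∈ 𝒱 (γ a))
    {W : Submodule k V} (hW : W.IsHomogeneous 𝒱)
    (h : ⊤ ≤ Submodule.span k (Set.range v) ⊔ W) {j : ι} (hj : ∀ a, γ a ≠ j) : 𝒱 j ≤ W := by
  have hker : Submodule.span k (Set.range v) ≤ LinearMap.ker (gradedProj 𝒱 j) := by
    rw [Submodule.span_le]
    rintro _ ⟨a, rfl⟩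
    exact gradedProj_of_mem_ne (hv a) (hj a)
  exact fun x hx => inf_sup_le_of_le_ker_gradedProj hW hker ⟨hx, h trivial⟩

lemma gradedProj_mem_span_image {α : Type*} {v : α → V} {γ : α → ι} (hv : ∀ a, v a ∈ 𝒱 (γ a))
    {x : V} (hx : x ∈ Submodule.span k (Set.range v)) (j : ι) :
    gradedProj 𝒱 j x ∈ Submodule.span k (v '' {a | γ a = j}) := by
  suffices Submodule.span k (Set.range v) ≤
      (Submodule.span k (v '' {a | γ a = j})).comap (gradedProj 𝒱 j) from this hx
  rw [Submodule.span_le]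
  rintro _ ⟨a, rfl⟩
  by_cases ha : γ a = j
  · rw [SetLike.mem_coe, Submodule.mem_comap, gradedProj_of_mem (ha ▸ hv a)]
    exact Submodule.subset_span ⟨a, ha, rfl⟩
  · rw [SetLike.mem_coe, Submodule.mem_comap, gradedProj_of_mem_ne (hv a) ha]
    exact zero_mem _

lemma isHomogeneous_span_range {α : Type*} {v : α → V} {γ : α → ι} (hv : ∀ a, v a ∈ 𝒱 (γ a)) :
    (Submodule.span k (Set.range v)).IsHomogeneous 𝒱 := fun j _ hx =>
  Submodule.span_mono (Set.image_subset_range _ _) (gradedProj_mem_span_image hv hx j)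

lemma inf_span_range_le {α : Type*} {v : α → V} {γ : α → ι} (hv : ∀ a, v a ∈ 𝒱 (γ a)) (j : ι) :
    𝒱 j ⊓ Submodule.span k (Set.range v) ≤ Submodule.span k (v '' {a | γ a = j}) :=
  fun _ hx => gradedProj_of_mem hx.1 ▸ gradedProj_mem_span_image hv hx.2 j

lemma inf_sup_le_inf_sup_of_isHomogeneous {F W : Submodule k V} (hF : F.IsHomogeneous 𝒱)
    (hW : W.IsHomogeneous 𝒱) (j : ι) : 𝒱 j ⊓ (F ⊔ W) ≤ F ⊓ 𝒱 j ⊔ W := by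
  rintro x ⟨hxj, hx⟩
  obtain ⟨f, hf, w, hw, rfl⟩ := Submodule.mem_sup.1 hx
  rw [← gradedProj_of_mem hxj, map_add]
  exact Submodule.add_mem_sup ⟨hF j hf, SetLike.coe_mem _⟩ (hW j hw)

lemma sum_relLength_inf_le {W : Submodule k V} (hW : W.IsHomogeneous 𝒱) (U : Submodule k V)
    (s : Finset ι) : ∑ j ∈ s, relLength (U ⊓ 𝒱 j) W ≤ relLength U W := by
  suffices ∑ j ∈ s, relLength (U ⊓ 𝒱 j) W ≤ relLength (s.sup fun j => U ⊓ 𝒱 j) W from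
    this.trans (relLength_mono_left _ (Finset.sup_le fun j _ => inf_le_left))
  induction s using Finset.induction_on with
  | empty => simp
  | insert a s ha ih =>
    set X := s.sup fun j => U ⊓ 𝒱 j
    have hX : X ≤ LinearMap.ker (gradedProj 𝒱 a) := by
      refine Finset.sup_le fun j hj z hz => ?_
      exact gradedProj_of_mem_ne hz.2 (ne_of_mem_of_not_mem hj ha)
    have ha_le : relLength (U ⊓ 𝒱 a) W ≤ relLength ((U ⊓ 𝒱 a) ⊔ X) (X ⊔ W) :=
      (relLength_le_of_inf_le ((inf_le_inf_right _ inf_le_right).trans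
        (inf_sup_le_of_le_ker_gradedProj hW hX))).trans (relLength_mono_left _ le_sup_left)
    rw [Finset.sup_insert, Finset.sum_insert ha, add_comm, relLength_eq_add W le_sup_right]
    gcongr

lemma le_finset_sup_inf_sup {U W : Submodule k V} (hU : U.IsHomogeneous 𝒱) {s : Finset ι}
    (hs : ∀ j ∉ s, U ⊓ 𝒱 j ≤ W) : U ≤ (s.sup fun j => U ⊓ 𝒱 j) ⊔ W := by
  classical
  intro u hu
  rw [← DirectSum.sum_support_decompose 𝒱 u]
  refine sum_mem fun j _ => ?_
  have hj : (DirectSum.decompose 𝒱 u j : V) ∈ U ⊓ 𝒱 j := ⟨hU j hu, SetLike.coe_mem _⟩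
  by_cases hjs : j ∈ s
  · exact Submodule.mem_sup_left (Finset.le_sup (f := fun j => U ⊓ 𝒱 j) hjs hj)
  · exact Submodule.mem_sup_right (hs j hjs hj)

/-- The Hilbert function `j ↦ dim_k ((U + W) / W)_j` of a relative quotient; its junk value is `0`
when it is not finitely supported. -/
def hilbertFun (𝒱 : ι → Submodule k V) (U W : Submodule k V) : ι →₀ ℕ :=
  open Classical in
  if h : (Function.support fun j => (relLength (U ⊓ 𝒱 j) W).toNat).Finite then
    Finsupp.ofSupportFinite _ h else 0

omit [DecidableEq ι] [DirectSum.Decomposition 𝒱] in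
lemma hilbertFun_eq_zero {U W : Submodule k V} (h : U ≤ W) : hilbertFun 𝒱 U W = 0 := by
  have h0 (j : ι) : relLength (U ⊓ 𝒱 j) W = 0 := relLength_eq_zero_iff.2 (inf_le_left.trans h)
  ext j
  rw [hilbertFun]
  split_ifs <;> simp [Finsupp.ofSupportFinite, h0]

lemma coe_hilbertFun_apply {U W : Submodule k V} (hW : W.IsHomogeneous 𝒱)
    (hfin : relLength U W ≠ ⊤) (j : ι) :
    (hilbertFun 𝒱 U W j : ℕ∞) = relLength (U ⊓ 𝒱 j) W := by
  have hne (j : ι) : relLength (U ⊓ 𝒱 j) W ≠ ⊤ :=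
    ne_top_of_le_ne_top hfin (relLength_mono_left W inf_le_left)
  have hsupp : (Function.support fun j => (relLength (U ⊓ 𝒱 j) W).toNat).Finite := by
    refine Set.not_infinite.1 fun hinf => ?_
    obtain ⟨s, hs, hcard⟩ := hinf.exists_subset_card_eq ((relLength U W).toNat + 1)
    have h : (s.card : ℕ∞) ≤ relLength U W := by
      refine le_trans ?_ (sum_relLength_inf_le hW U s)
      rw [Finset.cast_card]
      refine Finset.sum_le_sum fun j hj => Order.one_le_iff_ne_zero.2 fun h0 => hs hj ?_
      simp [h0]
    rw [hcard, ← ENat.natCast_toNat hfin] at h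
    exact absurd (Nat.cast_le.1 h) (by simp)
  rw [hilbertFun, dif_pos hsupp, Finsupp.ofSupportFinite_coe, ENat.natCast_toNat (hne j)]

lemma coe_degree_hilbertFun {U W : Submodule k V} (hU : U.IsHomogeneous 𝒱)
    (hW : W.IsHomogeneous 𝒱) (hfin : relLength U W ≠ ⊤) :
    ((hilbertFun 𝒱 U W).degree : ℕ∞) = relLength U W := by
  have hdeg : ((hilbertFun 𝒱 U W).degree : ℕ∞) =
      ∑ j ∈ (hilbertFun 𝒱 U W).support, relLength (U ⊓ 𝒱 j) W := by
    simp [Finsupp.degree_apply, coe_hilbertFun_apply hW hfin]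
  rw [hdeg]
  refine le_antisymm (sum_relLength_inf_le hW U _) ?_
  have hcover : U ≤ ((hilbertFun 𝒱 U W).support.sup fun j => U ⊓ 𝒱 j) ⊔ W := by
    refine le_finset_sup_inf_sup hU fun j hj => relLength_eq_zero_iff.1 ?_
    rw [← coe_hilbertFun_apply hW hfin, Finsupp.notMem_support_iff.1 hj, Nat.cast_zero]
  calc relLength U W
      ≤ relLength (((hilbertFun 𝒱 U W).support.sup fun j => U ⊓ 𝒱 j) ⊔ W) W :=
        relLength_mono_left W hcover
    _ ≤ _ := (relLength_sup_right_self _ _).trans_le (relLength_finset_sup_le _ _ _)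

lemma hilbertFun_anti_right {U W W' : Submodule k V} (hW : W.IsHomogeneous 𝒱)
    (hW' : W'.IsHomogeneous 𝒱) (h : W' ≤ W) (hfin : relLength U W' ≠ ⊤) :
    hilbertFun 𝒱 U W ≤ hilbertFun 𝒱 U W' := by
  intro j
  rw [← Nat.cast_le (α := ℕ∞), coe_hilbertFun_apply hW' hfin,
    coe_hilbertFun_apply hW (ne_top_of_le_ne_top hfin (relLength_anti_right U h))]
  exact relLength_anti_right _ h

lemma hilbertFun_le_add {U F W : Submodule k V} (hF : F.IsHomogeneous 𝒱) (hW : W.IsHomogeneous 𝒱)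
    (hFU : F ≤ U) (hfin : relLength U W ≠ ⊤) :
    hilbertFun 𝒱 U W ≤ hilbertFun 𝒱 F W + hilbertFun 𝒱 U (F ⊔ W) := by
  have hfin_F := ne_top_of_le_ne_top hfin (relLength_mono_left W hFU)
  have hfin_U := ne_top_of_le_ne_top hfin (relLength_anti_right U (le_sup_right : W ≤ F ⊔ W))
  intro j
  rw [← Nat.cast_le (α := ℕ∞), Finsupp.add_apply, Nat.cast_add, coe_hilbertFun_apply hW hfin,
    coe_hilbertFun_apply hW hfin_F, coe_hilbertFun_apply (isHomogeneous_sup hF hW) hfin_U,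
    relLength_eq_add W (inf_le_inf_right (𝒱 j) hFU)]
  gcongr
  exact relLength_le_of_inf_le ((inf_le_inf_right _ inf_le_right).trans
    (inf_sup_le_inf_sup_of_isHomogeneous hF hW j))

end Field

end Homogeneous

section FourierSums

open Topology TopologicalSpace

/-- The exponential `y ↦ e^{-ity}` of frequency `t`. -/
def expChar (t : ℝ) : C(ℂ, ℂ) where
  toFun y := exp (-I * y * t)
  continuous_toFun := by fun_prop

/-- The Fourier transform `y ↦ ∑ j, h j * e^{-iyj/q}` of the measure with mass `h j` at `j / q`. -/
def expSum (q : ℕ) : (ℤ →₀ ℕ) →+ C(ℂ, ℂ) :=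
  Finsupp.liftAddHom fun j => multiplesHom C(ℂ, ℂ) (expChar (j / q))

lemma continuous_expChar : Continuous expChar :=
  (ContinuousMap.curry
    (⟨fun x : ℝ × ℂ => exp (-I * x.2 * x.1), by fun_prop⟩ : C(ℝ × ℂ, ℂ))).continuous

lemma expChar_zero : expChar 0 = 1 := by
  ext y
  simp [expChar]

lemma expChar_add (s t : ℝ) : expChar (s + t) = expChar s * expChar t := by
  ext y
  simp only [expChar, ContinuousMap.coe_mk, ContinuousMap.mul_apply, ← exp_add]
  push_cast
  ring_nf

lemma expSum_single (q : ℕ) (j : ℤ) (c : ℕ) :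
    expSum q (Finsupp.single j c) = c • expChar (j / q) := by
  simp [expSum]

lemma expSum_apply (q : ℕ) (h : ℤ →₀ ℕ) (y : ℂ) :
    expSum q h y = ∑ j ∈ h.support, h j * exp (-I * y * j / q) := by
  simp [expSum, Finsupp.sum, ContinuousMap.sum_apply, expChar, neg_div, mul_div_assoc]

lemma expSum_mapDomain (p q : ℕ) (hp : p ≠ 0) (w : ℤ) (h : ℤ →₀ ℕ) :
    expSum (p * q) (h.mapDomain fun j => p * j + w) = expChar (w / (p * q)) * expSum q h := by
  induction h using Finsupp.induction_linear with
  | zero => simp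
  | add f g hf hg => simp only [Finsupp.mapDomain_add, map_add, hf, hg, mul_add]
  | single j c =>
    have hp' : (p : ℝ) ≠ 0 := Nat.cast_ne_zero.2 hp
    rw [Finsupp.mapDomain_single, expSum_single, expSum_single, mul_smul_comm, ← expChar_add]
    push_cast
    rw [add_div, mul_div_mul_left _ _ hp', add_comm]

lemma norm_expChar_sub_one_apply_le (t : ℝ) (y : ℂ) :
    ‖expChar t y - 1‖ ≤ |t| * ‖y‖ * Real.exp (|t| * ‖y‖) := by
  have h := norm_exp_sub_sum_le_norm_mul_exp (-I * y * t) 1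
  simpa [expChar, mul_comm |t|] using h

section Compact

variable (K : Compacts ℂ)

lemma exists_norm_le_of_mem_compacts : ∃ ρ : ℝ, 0 ≤ ρ ∧ ∀ y : K, ‖(y : ℂ)‖ ≤ ρ := by
  obtain ⟨ρ, hρ⟩ := K.isCompact.isBounded.exists_norm_le
  exact ⟨max ρ 0, le_max_right _ _, fun y => (hρ y y.2).trans (le_max_left _ _)⟩

lemma exists_norm_restrict_expChar_sub_one_le (T : ℕ) : ∃ E : ℝ, 0 ≤ E ∧ ∀ t : ℝ, |t| ≤ T →
    ‖(expChar t - 1).restrict K‖ ≤ E * |t| := by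
  obtain ⟨ρ, hρ₀, hρ⟩ := exists_norm_le_of_mem_compacts K
  refine ⟨ρ * Real.exp (T * ρ), by positivity, fun t ht => ?_⟩
  rw [ContinuousMap.norm_le _ (by positivity)]
  intro y
  calc ‖expChar t y - 1‖
      ≤ |t| * ‖(y : ℂ)‖ * Real.exp (|t| * ‖(y : ℂ)‖) := norm_expChar_sub_one_apply_le t y
    _ ≤ |t| * ρ * Real.exp (T * ρ) := by gcongr <;> exact hρ y
    _ = ρ * Real.exp (T * ρ) * |t| := by ring

lemma exists_norm_restrict_expSum_le (D : ℕ) : ∃ E : ℝ, 0 ≤ E ∧ ∀ (q : ℕ) (h : ℤ →₀ ℕ),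
    (∀ j ∈ h.support, |j| ≤ D * (q : ℤ)) → ‖(expSum q h).restrict K‖ ≤ E * h.degree := by
  obtain ⟨ρ, hρ₀, hρ⟩ := exists_norm_le_of_mem_compacts K
  refine ⟨Real.exp (ρ * D), by positivity, fun q h hh => ?_⟩
  rw [ContinuousMap.norm_le _ (by positivity)]
  intro y
  rw [ContinuousMap.restrict_apply, expSum_apply, Finsupp.degree_apply, Nat.cast_sum,
    Finset.mul_sum]
  refine norm_sum_le_of_le _ fun j hj => ?_
  have hj' : |(j / q : ℝ)| ≤ D := by
    rw [abs_div, Nat.abs_cast]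
    exact div_le_of_le_mul₀ (by positivity) (by positivity) (mod_cast hh j hj)
  rw [norm_mul, mul_comm, norm_natCast]
  gcongr
  calc ‖exp (-I * y * j / q)‖ ≤ Real.exp ‖-I * y * j / q‖ := norm_exp_le_exp_norm _
    _ = Real.exp (‖(y : ℂ)‖ * |(j / q : ℝ)|) := by
      simp [abs_div, mul_div_assoc]
    _ ≤ Real.exp (ρ * D) := by gcongr; exact hρ y

lemma exists_norm_restrict_expSum_sub_le (D : ℕ) : ∃ E : ℝ, 0 ≤ E ∧ ∀ (q : ℕ) (g h : ℤ →₀ ℕ),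
    (∀ j ∈ g.support, |j| ≤ D * (q : ℤ)) → (∀ j ∈ h.support, |j| ≤ D * (q : ℤ)) →
    ‖(expSum q h - expSum q g).restrict K‖ ≤ E * ((h - g).degree + (g - h).degree) := by
  obtain ⟨E, hE₀, hE⟩ := exists_norm_restrict_expSum_le K D
  refine ⟨E, hE₀, fun q g h hg hh => ?_⟩
  have hsub : expSum q h - expSum q g = expSum q (h - g) - expSum q (g - h) := by
    rw [sub_eq_sub_iff_add_eq_add, ← map_add, ← map_add]
    congr 1
    ext j
    simp only [Finsupp.add_apply, Finsupp.tsub_apply]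
    omega
  have hsupp {f f' : ℤ →₀ ℕ} (hf : ∀ j ∈ f.support, |j| ≤ D * (q : ℤ)) (j : ℤ)
      (hj : j ∈ (f - f').support) : |j| ≤ D * (q : ℤ) :=
    hf j (Finsupp.support_tsub hj)
  calc ‖(expSum q h - expSum q g).restrict K‖
      = ‖(expSum q (h - g)).restrict K - (expSum q (g - h)).restrict K‖ := by rw [hsub]; rfl
    _ ≤ E * (h - g).degree + E * (g - h).degree :=
      (norm_sub_le _ _).trans (add_le_add (hE q _ (hsupp hh)) (hE q _ (hsupp hg)))
    _ = E * ((h - g).degree + (g - h).degree) := by ring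

end Compact

lemma degree_add_degree_tsub (g h : ℤ →₀ ℕ) :
    g.degree + (h - g).degree = h.degree + (g - h).degree := by
  rw [← map_add, ← map_add]
  congr 1
  ext j
  simp only [Finsupp.add_apply, Finsupp.tsub_apply]
  omega

variable (p d : ℕ)

/-- A sequence of functions on `ℤ` whose `n`-th member is supported in `[-D pⁿ, D pⁿ]`, with `D`
independent of `n`. -/
def HasDilatedSupport (h : ℕ → ℤ →₀ ℕ) : Prop :=
  ∃ D : ℕ, ∀ n, ∀ j ∈ (h n).support, |j| ≤ D * (p : ℤ) ^ n

/-- A sequence of natural numbers which is `O(p^{n(d-1)})`. The condition is multiplied out so as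
to make sense for `d = 0`. -/
def IsNegligible (a : ℕ → ℕ) : Prop :=
  ∃ C : ℕ, ∀ n, a n * p ^ n ≤ C * (p ^ n) ^ d

/-- The normalised Fourier sums `y ↦ p^{-nd} ∑ j, h n j * e^{-iyj/pⁿ}`. -/
def normSum (h : ℕ → ℤ →₀ ℕ) (n : ℕ) : C(ℂ, ℂ) :=
  (1 / (p : ℂ) ^ n) ^ d • expSum (p ^ n) (h n)

lemma normSum_zero : normSum p d 0 = 0 := by
  ext n y
  simp [normSum]

variable {p d}

lemma IsNegligible.mono {a b : ℕ → ℕ} (hb : IsNegligible p d b) (h : ∀ n, a n ≤ b n) :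
    IsNegligible p d a := by
  obtain ⟨C, hC⟩ := hb
  exact ⟨C, fun n => (Nat.mul_le_mul_right _ (h n)).trans (hC n)⟩

lemma IsNegligible.comp_succ (hp : 0 < p) {a : ℕ → ℕ} (ha : IsNegligible p d a) :
    IsNegligible p d fun n => a (n + 1) := by
  obtain ⟨C, hC⟩ := ha
  refine ⟨C * p ^ d, fun n => ?_⟩
  calc a (n + 1) * p ^ n ≤ a (n + 1) * p ^ (n + 1) := by
        gcongr
        exact n.le_succ
    _ ≤ C * (p ^ (n + 1)) ^ d := hC (n + 1)
    _ = C * p ^ d * (p ^ n) ^ d := by ring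

lemma IsNegligible.exists_div_le (hp : 0 < p) {a : ℕ → ℕ} (ha : IsNegligible p d a) :
    ∃ C : ℕ, ∀ n, (a n : ℝ) / ((p : ℝ) ^ n) ^ d ≤ C * (1 / (p : ℝ)) ^ n := by
  obtain ⟨C, hC⟩ := ha
  refine ⟨C, fun n => ?_⟩
  rw [div_pow, one_pow, mul_one_div, div_le_div_iff₀ (by positivity) (by positivity)]
  exact_mod_cast hC n

lemma IsNegligible.summable (hp : 1 < p) {a : ℕ → ℕ} (ha : IsNegligible p d a) :
    Summable fun n => (a n : ℝ) / ((p : ℝ) ^ n) ^ d := by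
  obtain ⟨C, hC⟩ := ha.exists_div_le (by lia)
  exact .of_nonneg_of_le (fun n => by positivity) hC
    ((summable_geometric_of_lt_one (by positivity)
      ((div_lt_one (by positivity)).2 (mod_cast hp))).mul_left _)

lemma exists_le_of_le_add_summable {m t : ℕ → ℝ} (ht₀ : ∀ n, 0 ≤ t n) (ht : Summable t)
    (h : ∀ n, m (n + 1) ≤ m n + t n) : ∃ C, ∀ n, m n ≤ C := by
  refine ⟨m 0 + ∑' n, t n, fun n => ?_⟩
  suffices m n ≤ m 0 + ∑ i ∈ Finset.range n, t i by
    linarith [ht.sum_le_tsum (Finset.range n) fun i _ => ht₀ i]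
  induction n with
  | zero => simp
  | succ n ih => rw [Finset.sum_range_succ]; linarith [h n]

lemma summable_sub_add_of_le_add_summable {m t : ℕ → ℝ} (hm : ∀ n, 0 ≤ m n) (ht₀ : ∀ n, 0 ≤ t n)
    (ht : Summable t) (h : ∀ n, m (n + 1) ≤ m n + t n) :
    Summable fun n => m n - m (n + 1) + t n := by
  refine summable_of_sum_range_le (c := m 0 + ∑' n, t n) (fun n => by linarith [h n]) fun n => ?_
  rw [Finset.sum_add_distrib, Finset.sum_range_sub']
  linarith [hm n, ht.sum_le_tsum (Finset.range n) fun i _ => ht₀ i]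

lemma exists_tendsto_of_summable_restrict_sub {G : ℕ → C(ℂ, ℂ)}
    (h : ∀ K : Compacts ℂ, Summable fun n => ‖(G (n + 1) - G n).restrict K‖) :
    ∃ F, Tendsto G atTop (𝓝 F) := by
  have hsum := (ContinuousMap.summable_of_locally_summable_norm h).hasSum.tendsto_sum_nat
  simp only [Finset.sum_range_sub] at hsum
  exact ⟨_, by simpa using hsum.add_const (G 0)⟩

lemma norm_restrict_smul (n : ℕ) (f : C(ℂ, ℂ)) (K : Compacts ℂ) :
    ‖((1 / (p : ℂ) ^ n) ^ d • f).restrict K‖ = ‖f.restrict K‖ / ((p : ℝ) ^ n) ^ d := by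
  have h : ((1 / (p : ℂ) ^ n) ^ d • f).restrict K = (1 / (p : ℂ) ^ n) ^ d • f.restrict K := rfl
  rw [h, norm_smul]
  simp [div_eq_inv_mul]

lemma norm_restrict_mul_le (f g : C(ℂ, ℂ)) (K : Compacts ℂ) :
    ‖(f * g).restrict K‖ ≤ ‖f.restrict K‖ * ‖g.restrict K‖ :=
  norm_mul_le (f.restrict K) (g.restrict K)

lemma norm_restrict_add_le (f g : C(ℂ, ℂ)) (K : Compacts ℂ) :
    ‖(f + g).restrict K‖ ≤ ‖f.restrict K‖ + ‖g.restrict K‖ :=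
  norm_add_le (f.restrict K) (g.restrict K)

lemma norm_restrict_sum_le {α : Type*} (s : Finset α) (f : α → C(ℂ, ℂ)) (K : Compacts ℂ) :
    ‖(∑ a ∈ s, f a).restrict K‖ ≤ ∑ a ∈ s, ‖(f a).restrict K‖ := by
  rw [ContinuousMap.norm_le _ (by positivity)]
  intro y
  rw [ContinuousMap.restrict_apply, ContinuousMap.sum_apply]
  exact norm_sum_le_of_le _ fun a _ => ((f a).restrict K).norm_coe_le_norm y

section Recursion

lemma exists_nat_forall_abs_le {α : Type*} [Finite α] (w : α → ℤ) : ∃ W : ℕ, ∀ a, |w a| ≤ W := by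
  obtain ⟨W, hW⟩ := (Set.finite_range fun a => (w a).natAbs).bddAbove
  refine ⟨W, fun a => ?_⟩
  rw [Int.abs_eq_natAbs]
  exact_mod_cast hW ⟨a, rfl⟩

variable {α : Type*} [Fintype α]

/-- The sum of the images of `h` under the maps `j ↦ p * j + w a`. If `h` is the Hilbert function
of a graded vector space, this is the Hilbert function of the sum over `a` of its Frobenius twists
shifted by `w a`. -/
def frobeniusTransform (p : ℕ) (w : α → ℤ) (h : ℤ →₀ ℕ) : ℤ →₀ ℕ :=
  ∑ a, h.mapDomain fun j => p * j + w a

lemma degree_frobeniusTransform (w : α → ℤ) (h : ℤ →₀ ℕ) :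
    (frobeniusTransform p w h).degree = Fintype.card α * h.degree := by
  simp [frobeniusTransform, Finsupp.degree_mapDomain]

lemma abs_le_of_mem_support_frobeniusTransform {w : α → ℤ} {W D q : ℕ} (hW : ∀ a, |w a| ≤ W)
    (hp : p ≠ 0) (hq : q ≠ 0) {h : ℤ →₀ ℕ} (hh : ∀ j ∈ h.support, |j| ≤ D * (q : ℤ)) :
    ∀ j ∈ (frobeniusTransform p w h).support, |j| ≤ (D + W : ℕ) * ((p * q : ℕ) : ℤ) := by
  classical
  intro j hj
  obtain ⟨a, -, ha⟩ := Finset.mem_biUnion.1 (Finsupp.support_finsetSum hj)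
  obtain ⟨i, hi, rfl⟩ := Finset.mem_image.1 (Finsupp.mapDomain_support ha)
  have hpq : (1 : ℤ) ≤ p * q := mod_cast Nat.one_le_iff_ne_zero.2 (mul_ne_zero hp hq)
  calc |(p : ℤ) * i + w a| ≤ p * |i| + |w a| := by
        simpa [abs_mul] using abs_add_le ((p : ℤ) * i) (w a)
    _ ≤ p * (D * q) + W * 1 := by gcongr; exacts [hh i hi, by simpa using hW a]
    _ ≤ p * (D * q) + W * (p * q) := by gcongr
    _ = _ := by push_cast; ring

lemma expSum_frobeniusTransform (hp : p ≠ 0) (q : ℕ) (w : α → ℤ) (h : ℤ →₀ ℕ) :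
    expSum (p * q) (frobeniusTransform p w h) =
      (∑ a, expChar (w a / (p * q))) * expSum q h := by
  simp only [frobeniusTransform, map_sum, expSum_mapDomain p q hp, Finset.sum_mul]

lemma exists_norm_restrict_expSum_frobeniusTransform_sub_le (hp : p ≠ 0) (w : α → ℤ)
    (K : Compacts ℂ) : ∃ E : ℝ, 0 ≤ E ∧ ∀ (q : ℕ) (h : ℤ →₀ ℕ), q ≠ 0 →
      ‖(expSum (p * q) (frobeniusTransform p w h) -
        (Fintype.card α : ℂ) • expSum q h).restrict K‖ ≤ E / q * ‖(expSum q h).restrict K‖ := by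
  obtain ⟨W, hW⟩ := exists_nat_forall_abs_le w
  obtain ⟨E, hE₀, hE⟩ := exists_norm_restrict_expChar_sub_one_le K W
  refine ⟨Fintype.card α * (E * W), by positivity, fun q h hq => ?_⟩
  have hq' : (0 : ℝ) < q := by positivity
  have hw (a : α) : |(w a / (p * q) : ℝ)| ≤ W / q := by
    rw [abs_div, abs_of_nonneg (by positivity : (0 : ℝ) ≤ p * q)]
    gcongr
    · exact_mod_cast hW a
    · exact le_mul_of_one_le_left hq'.le (mod_cast Nat.one_le_iff_ne_zero.2 hp)
  have hdiff : expSum (p * q) (frobeniusTransform p w h) - (Fintype.card α : ℂ) • expSum q h =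
      (∑ a, (expChar (w a / (p * q)) - 1)) * expSum q h := by
    rw [expSum_frobeniusTransform hp, Finset.sum_sub_distrib, sub_mul]
    ext y
    simp
  rw [hdiff]
  refine (norm_restrict_mul_le _ _ K).trans (mul_le_mul_of_nonneg_right ?_ (norm_nonneg _))
  calc ‖(∑ a, (expChar (w a / (p * q)) - 1)).restrict K‖
      ≤ ∑ a, ‖(expChar (w a / (p * q)) - 1).restrict K‖ := norm_restrict_sum_le _ _ K
    _ ≤ ∑ _a : α, E * (W / q) := Finset.sum_le_sum fun a _ =>
        (hE _ ((hw a).trans (div_le_self (by positivity)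
          (mod_cast Nat.one_le_iff_ne_zero.2 hq)))).trans (by gcongr; exact hw a)
    _ = _ := by
        rw [Finset.sum_const, Finset.card_univ, nsmul_eq_mul]
        ring

lemma normSum_succ_sub (hp : p ≠ 0) {w : α → ℤ} (hα : Fintype.card α = p ^ d) (h : ℕ → ℤ →₀ ℕ)
    (n : ℕ) : normSum p d h (n + 1) - normSum p d h n =
      (1 / (p : ℂ) ^ (n + 1)) ^ d • (expSum (p * p ^ n) (h (n + 1)) -
        expSum (p * p ^ n) (frobeniusTransform p w (h n))) +
      (1 / (p : ℂ) ^ (n + 1)) ^ d • (expSum (p * p ^ n) (frobeniusTransform p w (h n)) -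
        (Fintype.card α : ℂ) • expSum (p ^ n) (h n)) := by
  have : (p : ℂ) ≠ 0 := Nat.cast_ne_zero.2 hp
  have hscale : (1 / (p : ℂ) ^ (n + 1)) ^ d * (p : ℂ) ^ d = (1 / (p : ℂ) ^ n) ^ d := by
    rw [← mul_pow]
    congr 1
    field_simp
    ring
  rw [hα, Nat.cast_pow, smul_sub, smul_sub, smul_smul, hscale, sub_add_sub_cancel,
    ← Nat.pow_succ']
  rfl

lemma exists_norm_restrict_normSum_succ_sub_le (hp : p ≠ 0) (w : α → ℤ)
    (hα : Fintype.card α = p ^ d) {h : ℕ → ℤ →₀ ℕ} (hsupp : HasDilatedSupport p h)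
    (K : Compacts ℂ) : ∃ E E' : ℝ, 0 ≤ E' ∧ ∀ n,
      ‖(normSum p d h (n + 1) - normSum p d h n).restrict K‖ ≤
        E * (((h (n + 1) - frobeniusTransform p w (h n)).degree +
          (frobeniusTransform p w (h n) - h (n + 1)).degree) / ((p : ℝ) ^ (n + 1)) ^ d) +
        E' * ((h n).degree / ((p : ℝ) ^ n) ^ d * (1 / (p : ℝ)) ^ n) := by
  obtain ⟨W, hW⟩ : ∃ W : ℕ, ∀ a, |w a| ≤ W := exists_nat_forall_abs_le w
  obtain ⟨D, hD⟩ := hsupp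
  obtain ⟨E₁, _, hE₁⟩ := exists_norm_restrict_expSum_sub_le K (D + W)
  obtain ⟨E₂, hE₂₀, hE₂⟩ := exists_norm_restrict_expSum_frobeniusTransform_sub_le hp w K
  obtain ⟨E₃, hE₃₀, hE₃⟩ := exists_norm_restrict_expSum_le K D
  refine ⟨E₁, E₂ * E₃, by positivity, fun n => ?_⟩
  have hpn : p ^ n ≠ 0 := pow_ne_zero n hp
  have hfirst := hE₁ (p * p ^ n) (frobeniusTransform p w (h n)) (h (n + 1))
    (abs_le_of_mem_support_frobeniusTransform hW hp hpn (by simpa using hD n))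
    fun j hj => (hD (n + 1) j hj).trans (by push_cast [pow_succ']; gcongr; simp)
  have hsecond := (hE₂ (p ^ n) (h n) hpn).trans
    (mul_le_mul_of_nonneg_left (hE₃ (p ^ n) (h n) (by simpa using hD n)) (by positivity))
  rw [normSum_succ_sub (w := w) hp hα]
  refine (norm_restrict_add_le _ _ K).trans ?_
  rw [norm_restrict_smul, norm_restrict_smul]
  have hp₁ : (1 : ℝ) ≤ p := mod_cast Nat.one_le_iff_ne_zero.2 hp
  refine add_le_add ?_ ?_
  · rw [← mul_div_assoc]
    gcongr
  · calc _ ≤ E₂ / (p ^ n : ℕ) * (E₃ * (h n).degree) / ((p : ℝ) ^ n) ^ d := by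
          gcongr
          lia
      _ = _ := by push_cast; rw [div_pow, one_pow]; ring

lemma degree_frobeniusTransform_tsub_div (hp : p ≠ 0) {w : α → ℤ} (hα : Fintype.card α = p ^ d)
    (g h : ℤ →₀ ℕ) (n : ℕ) : (frobeniusTransform p w g - h).degree / ((p : ℝ) ^ (n + 1)) ^ d =
      g.degree / ((p : ℝ) ^ n) ^ d - h.degree / ((p : ℝ) ^ (n + 1)) ^ d +
        (h - frobeniusTransform p w g).degree / ((p : ℝ) ^ (n + 1)) ^ d := by
  have : (p : ℝ) ≠ 0 := Nat.cast_ne_zero.2 hp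
  have hdeg : (p : ℝ) ^ d * g.degree + (h - frobeniusTransform p w g).degree =
      h.degree + (frobeniusTransform p w g - h).degree := by
    have h := degree_add_degree_tsub (frobeniusTransform p w g) h
    rw [degree_frobeniusTransform, hα] at h
    exact_mod_cast h
  rw [← sub_eq_iff_eq_add'.2 hdeg.symm, pow_succ, mul_pow]
  field_simp
  ring

-- Telescoping the normalised masses turns the bound on the excess of `h (n + 1)` over its
-- predecessor's transform into summability of the defect in the other direction.
theorem exists_tendsto_normSum_of_frobeniusTransform (hp : 1 < p) (w : α → ℤ)
    (hα : Fintype.card α = p ^ d) {h : ℕ → ℤ →₀ ℕ} (hsupp : HasDilatedSupport p h)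
    (hrec : IsNegligible p d fun n => (h (n + 1) - frobeniusTransform p w (h n)).degree) :
    ∃ F, Tendsto (normSum p d h) atTop (𝓝 F) := by
  have hp₀ : (0 : ℝ) < p := by positivity
  set m : ℕ → ℝ := fun n => (h n).degree / ((p : ℝ) ^ n) ^ d
  set t : ℕ → ℝ := fun n =>
    (h (n + 1) - frobeniusTransform p w (h n)).degree / ((p : ℝ) ^ (n + 1)) ^ d
  have ht₀ (n : ℕ) : 0 ≤ t n := by positivity
  have ht : Summable t := ((hrec.summable hp).mul_right (1 / (p : ℝ) ^ d)).congr fun n => by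
    rw [div_mul_div_comm, mul_one, ← mul_pow, ← pow_succ]
  have hexcess (n : ℕ) : (frobeniusTransform p w (h n) - h (n + 1)).degree /
      ((p : ℝ) ^ (n + 1)) ^ d = m n - m (n + 1) + t n :=
    degree_frobeniusTransform_tsub_div (by lia) hα _ _ n
  have hle (n : ℕ) : m (n + 1) ≤ m n + t n := by
    have : 0 ≤ m n - m (n + 1) + t n := hexcess n ▸ by positivity
    linarith
  obtain ⟨M, hM⟩ := exists_le_of_le_add_summable ht₀ ht hle
  refine exists_tendsto_of_summable_restrict_sub fun K => ?_
  obtain ⟨E, E', hE', hE⟩ := exists_norm_restrict_normSum_succ_sub_le (by lia) w hα hsupp K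
  have hgeom : Summable fun n => M * (1 / (p : ℝ)) ^ n :=
    (summable_geometric_of_lt_one (by positivity)
      ((div_lt_one hp₀).2 (mod_cast hp))).mul_left M
  have hdrift := summable_sub_add_of_le_add_summable (fun n => by positivity) ht₀ ht hle
  refine .of_nonneg_of_le (fun n => norm_nonneg _) (fun n => (hE n).trans ?_)
    (((ht.add hdrift).mul_left E).add (hgeom.mul_left E'))
  rw [add_div, hexcess]
  gcongr
  exact hM n

end Recursion

lemma HasDilatedSupport.of_le_add_mapDomain (hp : p ≠ 0) {μ : ℤ} {h g₁ g₂ : ℕ → ℤ →₀ ℕ}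
    (hg₁ : HasDilatedSupport p g₁) (hg₂ : HasDilatedSupport p g₂)
    (hle : ∀ n, h n ≤ g₁ n + (g₂ n).mapDomain (· + μ)) : HasDilatedSupport p h := by
  classical
  obtain ⟨D₁, hD₁⟩ := hg₁
  obtain ⟨D₂, hD₂⟩ := hg₂
  refine ⟨D₁ + D₂ + μ.natAbs, fun n j hj => ?_⟩
  have hpn : (1 : ℤ) ≤ p ^ n := mod_cast Nat.one_le_iff_ne_zero.2 (pow_ne_zero n hp)
  push_cast [add_mul]
  rcases Finset.mem_union.1 (Finsupp.support_add (Finsupp.support_mono (hle n) hj)) with hj | hj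
  · have := hD₁ n j hj
    have : 0 ≤ D₂ * (p : ℤ) ^ n + |μ| * (p : ℤ) ^ n := by positivity
    linarith
  · obtain ⟨i, hi, rfl⟩ := Finset.mem_image.1 (Finsupp.mapDomain_support hj)
    have := hD₂ n i hi
    have := abs_add_le i μ
    have := le_mul_of_one_le_right (abs_nonneg μ) hpn
    have : 0 ≤ D₁ * (p : ℤ) ^ n := by positivity
    linarith

lemma tendsto_zero_of_restrict {G : ℕ → C(ℂ, ℂ)}
    (h : ∀ K : Compacts ℂ, Tendsto (fun n => ‖(G n).restrict K‖) atTop (𝓝 0)) :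
    Tendsto G atTop (𝓝 0) := by
  refine (ContinuousMap.tendsto_compactOpen_iff_forall _ _).2 fun K hK => ?_
  exact tendsto_zero_iff_norm_tendsto_zero.2 (h ⟨K, hK⟩)

lemma tendsto_normSum_sub_of_le (hp : 1 < p) {g h : ℕ → ℤ →₀ ℕ} (hg : HasDilatedSupport p g)
    (hle : ∀ n, h n ≤ g n) (hdeg : IsNegligible p d fun n => (g n).degree - (h n).degree) :
    Tendsto (normSum p d h - normSum p d g) atTop (𝓝 0) := by
  obtain ⟨D, hD⟩ := hg
  refine tendsto_zero_of_restrict fun K => ?_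
  obtain ⟨E, _, hE⟩ := exists_norm_restrict_expSum_sub_le K D
  have hlim := ((hdeg.summable hp).tendsto_atTop_zero).const_mul E
  rw [mul_zero] at hlim
  refine squeeze_zero (fun n => norm_nonneg _) (fun n => ?_) hlim
  have hgh : (g n - h n).degree = (g n).degree - (h n).degree := by
    have := degree_add_degree_tsub (h n) (g n)
    rw [tsub_eq_zero_of_le (hle n)] at this
    simp only [map_zero] at this
    lia
  have hbound := hE (p ^ n) (g n) (h n) (by simpa using hD n)
    fun j hj => by simpa using hD n j (Finsupp.support_mono (hle n) hj)
  rw [tsub_eq_zero_of_le (hle n), map_zero, Nat.cast_zero, zero_add, hgh] at hbound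
  have hsub : (normSum p d h - normSum p d g) n =
      (1 / (p : ℂ) ^ n) ^ d • (expSum (p ^ n) (h n) - expSum (p ^ n) (g n)) := (smul_sub ..).symm
  rw [hsub, norm_restrict_smul, ← mul_div_assoc]
  gcongr

lemma normSum_add_mapDomain (g₁ g₂ : ℕ → ℤ →₀ ℕ) (μ : ℤ) (n : ℕ) :
    normSum p d (fun n => g₁ n + (g₂ n).mapDomain (· + μ)) n =
      normSum p d g₁ n + expChar (μ / p ^ n) * normSum p d g₂ n := by
  have h := expSum_mapDomain 1 (p ^ n) one_ne_zero μ (g₂ n)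
  simp only [one_mul, Nat.cast_one, Nat.cast_pow] at h
  ext y
  simp [normSum, h]
  ring

theorem exists_tendsto_normSum_of_le_add_mapDomain (hp : 1 < p) (μ : ℤ) {h g₁ g₂ : ℕ → ℤ →₀ ℕ}
    (hg₁ : HasDilatedSupport p g₁) (hg₂ : HasDilatedSupport p g₂)
    (hle : ∀ n, h n ≤ g₁ n + (g₂ n).mapDomain (· + μ))
    (hdeg : IsNegligible p d fun n => (g₁ n).degree + (g₂ n).degree - (h n).degree)
    (hF₁ : ∃ F, Tendsto (normSum p d g₁) atTop (𝓝 F))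
    (hF₂ : ∃ F, Tendsto (normSum p d g₂) atTop (𝓝 F)) :
    ∃ F, Tendsto (normSum p d h) atTop (𝓝 F) := by
  obtain ⟨F₁, hF₁⟩ := hF₁
  obtain ⟨F₂, hF₂⟩ := hF₂
  have hμ : Tendsto (fun n => expChar (μ / (p : ℝ) ^ n)) atTop (𝓝 1) := by
    rw [← expChar_zero]
    exact (continuous_expChar.tendsto 0).comp
      (tendsto_const_nhds.div_atTop (tendsto_pow_atTop_atTop_of_one_lt (mod_cast hp)))
  have hsum := (hF₁.add (hμ.mul hF₂)).congr fun n => (normSum_add_mapDomain g₁ g₂ μ n).symm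
  have hsub := tendsto_normSum_sub_of_le hp
    (.of_le_add_mapDomain (by lia) hg₁ hg₂ fun n => le_rfl) hle (d := d) (by
      simpa [Finsupp.degree_mapDomain] using hdeg)
  exact ⟨_, (hsub.add hsum).congr fun n => by simp⟩

end FourierSums

section Rank

section Domain

variable {A V : Type*} [CommRing A] [IsDomain A] [IsNoetherianRing A] [AddCommGroup V]
  [Module A V] [Module.Finite A V]

lemma finrank_le_of_smul_mem {X Y : Submodule A V} {f : A} (hf : f ≠ 0) (h : ∀ v ∈ X, f • v ∈ Y) :
    Module.finrank A X ≤ Module.finrank A Y := by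
  have hquot : Module.finrank A (X ⧸ Y.submoduleOf X) = 0 := by
    rw [Module.finrank_eq_zero_iff]
    intro q
    obtain ⟨v, rfl⟩ := (Y.submoduleOf X).mkQ_surjective q
    refine ⟨f, hf, ?_⟩
    rw [← map_smul, Submodule.mkQ_apply, Submodule.Quotient.mk_eq_zero]
    exact h v v.2
  calc Module.finrank A X = Module.finrank A (Y.submoduleOf X) := by
        rw [← Submodule.finrank_quotient_add_finrank (Y.submoduleOf X), hquot, zero_add]
    _ = Module.finrank A ((Y.submoduleOf X).map X.subtype) :=
        (Submodule.equivMapOfInjective _ X.injective_subtype _).finrank_eq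
    _ ≤ Module.finrank A Y := Submodule.finrank_mono (Submodule.map_le_iff_le_comap.2 le_rfl)

lemma exists_smul_mem_of_finrank_le {X Y : Submodule A V} (hXY : X ≤ Y)
    (h : Module.finrank A Y ≤ Module.finrank A X) : ∃ f : A, f ≠ 0 ∧ ∀ v ∈ Y, f • v ∈ X := by
  have hsum := Submodule.finrank_quotient_add_finrank (X.submoduleOf Y)
  have hX := (Submodule.submoduleOfEquivOfLe hXY).finrank_eq
  have htorsion : Module.finrank A (Y ⧸ X.submoduleOf Y) = 0 := by omega
  rw [Module.finrank_eq_zero_iff_isTorsion] at htorsion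
  obtain ⟨f, hf, hf0⟩ := Submodule.annihilator_top_inter_nonZeroDivisors htorsion
  refine ⟨f, nonZeroDivisors.ne_zero hf0, fun v hv => ?_⟩
  have hfv := Submodule.mem_annihilator.1 hf ((X.submoduleOf Y).mkQ ⟨v, hv⟩) trivial
  rwa [← map_smul, Submodule.mkQ_apply, Submodule.Quotient.mk_eq_zero] at hfv

lemma exists_smul_mem_succ_of_antitone {E : ℕ → Submodule A V} (hE : Antitone E) :
    ∃ e, ∃ f : A, f ≠ 0 ∧ ∀ v ∈ E e, f • v ∈ E (e + 1) := by
  let r : ℕ → ℕ := fun e => Module.finrank A (E e)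
  let e := Function.argmin r
  exact ⟨e, exists_smul_mem_of_finrank_le (hE e.le_succ) (Function.argmin_le r (e + 1))⟩

lemma finrank_sup_le_add (X Y : Submodule A V) :
    Module.finrank A (X ⊔ Y : Submodule A V) ≤ Module.finrank A X + Module.finrank A Y := by
  have h := Submodule.rank_sup_add_rank_inf_eq X Y
  simp only [← Module.finrank_eq_rank] at h
  norm_cast at h
  omega

variable (A V) in
lemma exists_smul_mem_span_range : ∃ (v : Fin (Module.finrank A V) → V) (f : A), f ≠ 0 ∧
    ∀ x : V, f • x ∈ Submodule.span A (Set.range v) := by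
  obtain ⟨v, hv⟩ := exists_linearIndependent_of_le_finrank (R := A) (M := V) le_rfl
  obtain ⟨f, hf, h⟩ := exists_smul_mem_of_finrank_le
    (le_top : Submodule.span A (Set.range v) ≤ ⊤) (by simp [finrank_span_eq_card hv])
  exact ⟨v, f, hf, fun x => h x trivial⟩

end Domain

/-- The `A`-span of the `p`-th powers of the elements of `X`. -/
def powSpan {A B : Type*} [CommRing A] [CommRing B] [Algebra A B] (p : ℕ) (X : Submodule A B) :
    Submodule A B :=
  Submodule.span A ((· ^ p) '' (X : Set B))

section FiniteAlgebra

variable {A B : Type*} [CommRing A] [CommRing B] [Algebra A B]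

lemma powSpan_restrictScalars_le {p : ℕ} (hp : 2 ≤ p) (J : Ideal B) :
    powSpan p (J.restrictScalars A) ≤ (J * J).restrictScalars A := by
  rw [powSpan, Submodule.span_le]
  rintro _ ⟨j, hj, rfl⟩
  have hjj : j ^ 2 ∈ J * J := sq j ▸ Ideal.mul_mem_mul hj hj
  exact Ideal.pow_mem_of_pow_mem _ hjj hp

lemma exists_pow_sub_mul_eq_zero {b : B} {J : Ideal B} (hJ : J.FG)
    (h : ∀ j ∈ J, b * j ∈ J * J) : ∃ n, ∃ u ∈ J, ∀ j ∈ J, (b ^ n - u) * j = 0 := by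
  have : Module.Finite B J := Module.Finite.iff_fg.2 hJ
  have hrange : (algebraMap B (Module.End B J) b).range ≤ J • ⊤ := by
    rintro _ ⟨j, rfl⟩
    rw [Submodule.mem_smul_top_iff]
    exact h j j.2
  obtain ⟨q, hq, -, hcoeff, hzero⟩ :=
    LinearMap.exists_monic_and_natDegree_eq_and_coeff_mem_pow_and_aeval_eq_zero B _ J hrange
  rw [Polynomial.aeval_algebraMap_apply, Polynomial.coe_aeval_eq_eval] at hzero
  refine ⟨q.natDegree, -∑ i ∈ Finset.range q.natDegree, q.coeff i * b ^ i, ?_, fun j hj => ?_⟩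
  · refine neg_mem (sum_mem fun i hi => Ideal.mul_mem_right _ _ ?_)
    exact Ideal.pow_le_self (Nat.sub_ne_zero_of_lt (Finset.mem_range.1 hi)) (hcoeff i)
  · have heval : b ^ q.natDegree - -∑ i ∈ Finset.range q.natDegree, q.coeff i * b ^ i =
        q.eval b := by
      rw [Polynomial.eval_eq_sum_range, Finset.sum_range_succ, hq.coeff_natDegree]
      ring
    rw [heval]
    exact congrArg Subtype.val (LinearMap.congr_fun hzero ⟨j, hj⟩)

variable [IsDomain A] [IsNoetherianRing A] [Module.Finite A B]

lemma finrank_powSpan_top_le (p : ℕ) [Fact p.Prime] [CharP B p] (X : Submodule A B) :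
    Module.finrank A (powSpan p (⊤ : Submodule A B)) ≤
      Module.finrank A (powSpan p X) + Module.finrank A (B ⧸ X) := by
  obtain ⟨v, g, hg, hv⟩ := exists_smul_mem_span_range A (B ⧸ X)
  choose b hb using fun i => X.mkQ_surjective (v i)
  let T : Submodule A B := Submodule.span A (Set.range fun i => b i ^ p)
  have hpow : powSpan p (⊤ : Submodule A B) ≤
      (powSpan p X ⊔ T).comap (LinearMap.lsmul A B (g ^ p)) := by
    rw [powSpan, Submodule.span_le]
    rintro _ ⟨c, -, rfl⟩
    obtain ⟨a, ha⟩ := (Submodule.mem_span_range_iff_exists_fun A).1 (hv (X.mkQ c))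
    have hx : g • c - ∑ i, a i • b i ∈ X := by
      rw [← Submodule.Quotient.mk_eq_zero X, ← Submodule.mkQ_apply, map_sub, map_sum, map_smul,
        ← ha]
      simp [-Submodule.mkQ_apply, hb]
    have hexpand : g ^ p • c ^ p =
        (g • c - ∑ i, a i • b i) ^ p + ∑ i, a i ^ p • b i ^ p := by
      rw [← smul_pow, ← sub_add_cancel (g • c) (∑ i, a i • b i), add_pow_char, sum_pow_char,
        sub_add_cancel]
      simp [smul_pow]
    change g ^ p • c ^ p ∈ powSpan p X ⊔ T
    rw [hexpand]
    exact Submodule.add_mem_sup (Submodule.subset_span ⟨_, hx, rfl⟩)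
      (sum_mem fun i _ => Submodule.smul_mem _ _ (Submodule.subset_span ⟨i, rfl⟩))
  calc Module.finrank A (powSpan p (⊤ : Submodule A B))
      ≤ Module.finrank A (powSpan p X ⊔ T : Submodule A B) :=
        finrank_le_of_smul_mem (pow_ne_zero p hg) hpow
    _ ≤ Module.finrank A (powSpan p X) + Module.finrank A T := finrank_sup_le_add _ _
    _ ≤ _ := by
        gcongr
        exact (finrank_range_le_card (R := A) fun i => b i ^ p).trans_eq (Fintype.card_fin _)

lemma exists_smul_mem_powSpan {p : ℕ} [Fact p.Prime] [CharP B p] {f : A} (hf : f ≠ 0)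
    (hfB : ∀ b : B, f • b ∈ powSpan p (⊤ : Submodule A B)) {X : Submodule A B}
    (hX : powSpan p X ≤ X) : ∃ g : A, g ≠ 0 ∧ ∀ x ∈ X, g • x ∈ powSpan p X := by
  refine exists_smul_mem_of_finrank_le hX ?_
  have h_top := finrank_le_of_smul_mem (X := ⊤) hf fun b _ => hfB b
  have h_quot := Submodule.finrank_quotient_add_finrank X
  have h_pow := finrank_powSpan_top_le p X
  rw [finrank_top] at h_top
  omega

-- The `A`-span of the `p`-th powers of `J` lies in `J ^ 2` and has the same rank as `J`, so that
-- `g * J ≤ J ^ 2` for some `g ≠ 0`. The determinant trick then applies.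
theorem exists_algebraMap_sub_mul_eq_zero {p : ℕ} [Fact p.Prime] [CharP B p] {f : A} (hf : f ≠ 0)
    (hfB : ∀ b : B, f • b ∈ powSpan p (⊤ : Submodule A B)) (J : Ideal B) :
    ∃ s : A, s ≠ 0 ∧ ∃ u ∈ J, ∀ j ∈ J, (algebraMap A B s - u) * j = 0 := by
  have hJJ := powSpan_restrictScalars_le (A := A) (Fact.out : p.Prime).two_le J
  obtain ⟨g, hg, hgJ⟩ := exists_smul_mem_powSpan (X := J.restrictScalars A) hf hfB
    (hJJ.trans fun j hj => Ideal.mul_le_left hj)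
  have : IsNoetherianRing B := IsNoetherianRing.of_finite A B
  obtain ⟨n, u, hu, hJ⟩ := exists_pow_sub_mul_eq_zero (b := algebraMap A B g)
    (IsNoetherian.noetherian J) fun j hj => by
      rw [← Algebra.smul_def]
      exact hJJ (hgJ j hj)
  exact ⟨g ^ n, pow_ne_zero n hg, u, hu, by rwa [map_pow]⟩

end FiniteAlgebra

section PowSubalgebra

variable (A : Type*) {S : Type*} [CommRing A] [CommRing S] [Algebra A S]

variable (S) in
/-- The subalgebra `A[S^q]` generated by the `q`-th powers. -/
def powSubalgebra (q : ℕ) : Subalgebra A S :=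
  Algebra.adjoin A (Set.range fun r : S => r ^ q)

lemma pow_mem_powSubalgebra (q : ℕ) (r : S) : r ^ q ∈ powSubalgebra A S q :=
  Algebra.subset_adjoin ⟨r, rfl⟩

lemma powSubalgebra_mul_le_powSpan (p q : ℕ) :
    (powSubalgebra A S (q * p)).toSubmodule ≤ powSpan p (powSubalgebra A S q).toSubmodule := by
  rw [powSubalgebra, Algebra.adjoin_eq_span]
  refine Submodule.span_mono ?_
  suffices Submonoid.closure (Set.range fun r : S => r ^ (q * p)) ≤
      (powSubalgebra A S q).toSubmonoid.map (powMonoidHom p) from this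
  rw [Submonoid.closure_le]
  rintro _ ⟨r, rfl⟩
  exact ⟨r ^ q, pow_mem_powSubalgebra A q r, (pow_mul r q p).symm⟩

variable (S) in
theorem exists_smul_mem_powSpan_powSubalgebra [IsDomain A] [IsNoetherianRing A]
    [Module.Finite A S] (p : ℕ) : ∃ e, ∃ f : A, f ≠ 0 ∧
      ∀ b : powSubalgebra A S (p ^ e), f • b ∈ powSpan p (⊤ : Submodule A _) := by
  have hanti : Antitone fun e => (powSubalgebra A S (p ^ e)).toSubmodule := by
    refine antitone_nat_of_succ_le fun e => Algebra.adjoin_le ?_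
    rintro _ ⟨r, rfl⟩
    dsimp only
    rw [pow_succ', pow_mul]
    exact pow_mem_powSubalgebra A _ _
  obtain ⟨e, f, hf, h⟩ := exists_smul_mem_succ_of_antitone hanti
  refine ⟨e, f, hf, fun b => ?_⟩
  have hfb := powSubalgebra_mul_le_powSpan A p (p ^ e) (h b b.2)
  have hmap : powSpan p (powSubalgebra A S (p ^ e)).toSubmodule =
      (powSpan p (⊤ : Submodule A (powSubalgebra A S (p ^ e)))).map
        (powSubalgebra A S (p ^ e)).val.toLinearMap := by
    rw [powSpan, powSpan, Submodule.map_span, Set.image_image]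
    congr 1
    ext x
    simp
  rw [hmap] at hfb
  obtain ⟨c, hc, hcb⟩ := hfb
  rwa [show f • b = c from Subtype.ext hcb.symm]

end PowSubalgebra

end Rank

section PFamily

open MvPolynomial

variable {k σ B : Type*} [Field k] [CommRing B] [Algebra k B] [Algebra (MvPolynomial σ k) B]
  {ℬ : ℤ → Submodule k B} [GradedAlgebra ℬ] {p : ℕ}

variable (σ p ℬ) in
/-- A sequence of homogeneous ideals `𝔟 n` such that `p`-th powers carry `𝔟 n` into `𝔟 (n + 1)` and
`𝔟 n` contains the `(c * p ^ n)`-th powers of the variables.  It generalises the sequence of bracket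
powers `I^{[p^n]}`, and is stable under adding a fixed homogeneous ideal. -/
structure IsPFamily (𝔟 : ℕ → Ideal B) : Prop where
  isHomogeneous : ∀ n, (𝔟 n).IsHomogeneous ℬ
  pow_mem : ∀ n, ∀ b ∈ 𝔟 n, b ^ p ∈ 𝔟 (n + 1)
  exists_map_varPow_le : ∃ c : ℕ, 0 < c ∧
    ∀ n, (varPow σ k (c * p ^ n)).map (algebraMap (MvPolynomial σ k) B) ≤ 𝔟 n

namespace IsPFamily

variable {𝔟 : ℕ → Ideal B}

lemma sup (h𝔟 : IsPFamily σ ℬ p 𝔟) [Fact p.Prime] [CharP B p] {J : Ideal B}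
    (hJ : J.IsHomogeneous ℬ) : IsPFamily σ ℬ p fun n => J ⊔ 𝔟 n where
  isHomogeneous n := isHomogeneous_sup hJ (h𝔟.isHomogeneous n)
  pow_mem n b hb := by
    obtain ⟨u, hu, v, hv, rfl⟩ := Submodule.mem_sup.1 hb
    rw [add_pow_char]
    exact Submodule.add_mem_sup (J.pow_mem_of_mem hu p (Fact.out : p.Prime).pos)
      (h𝔟.pow_mem n v hv)
  exists_map_varPow_le := by
    obtain ⟨c, hc, h⟩ := h𝔟.exists_map_varPow_le
    exact ⟨c, hc, fun n => (h n).trans le_sup_right⟩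

lemma exists_varPow_smul_mem (h𝔟 : IsPFamily σ ℬ p 𝔟) {V : Type*} [AddCommGroup V]
    [Module (MvPolynomial σ k) V] [Module B V] [IsScalarTower (MvPolynomial σ k) B V] :
    ∃ c : ℕ, 0 < c ∧ ∀ (n : ℕ) (N : Submodule B V),
      ∀ q ∈ varPow σ k (c * p ^ n), ∀ v ∈ N, q • v ∈ 𝔟 n • N := by
  obtain ⟨c, hc, h⟩ := h𝔟.exists_map_varPow_le
  refine ⟨c, hc, fun n N q hq v hv => ?_⟩
  rw [← algebraMap_smul B q v]
  exact Submodule.smul_mem_smul (h n (Ideal.mem_map_of_mem _ hq)) hv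

section Module

variable {V : Type*} [AddCommGroup V] [Module (MvPolynomial σ k) V] [Module B V] [Module k V]
  [IsScalarTower (MvPolynomial σ k) B V] [IsScalarTower k (MvPolynomial σ k) V]
  [IsScalarTower k B V] [Module.Finite (MvPolynomial σ k) V]

lemma relLength_smul_ne_top [Finite σ] (h𝔟 : IsPFamily σ ℬ p 𝔟) (N : Submodule B V) (n : ℕ) :
    relLength (N.restrictScalars k) ((𝔟 n • N).restrictScalars k) ≠ ⊤ := by
  obtain ⟨c, -, h⟩ := h𝔟.exists_varPow_smul_mem (V := V)
  exact relLength_ne_top_of_varPow_smul_mem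
    (IsNoetherian.noetherian (N.restrictScalars (MvPolynomial σ k))) (h n N)

lemma exists_relLength_mul_pow_le [Fintype σ] (h𝔟 : IsPFamily σ ℬ p 𝔟) (N : Submodule B V)
    {f : MvPolynomial σ k} (hf : f ≠ 0) :
    ∃ C : ℕ, ∀ (n : ℕ) (W : Submodule k V), (𝔟 n • N).restrictScalars k ≤ W →
      (∀ v ∈ N, f • v ∈ W) →
      relLength (N.restrictScalars k) W * (p ^ n : ℕ) ≤
        (C * (p ^ n) ^ Fintype.card σ : ℕ) := by
  obtain ⟨c, hc, h⟩ := h𝔟.exists_varPow_smul_mem (V := V)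
  obtain ⟨C, hC⟩ := exists_relLength_mul_le_of_smul_mem
    (IsNoetherian.noetherian (N.restrictScalars (MvPolynomial σ k))) hf
  refine ⟨C * c ^ Fintype.card σ, fun n W hW hfW => ?_⟩
  calc relLength (N.restrictScalars k) W * (p ^ n : ℕ)
      ≤ relLength (N.restrictScalars k) W * (c * p ^ n : ℕ) := by
        gcongr
        exact Nat.le_mul_of_pos_left _ hc
    _ ≤ (C * (c * p ^ n) ^ Fintype.card σ : ℕ) := hC _ W hfW fun q hq v hv => hW (h n N q hq v hv)
    _ = _ := by rw [mul_pow, mul_assoc]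

end Module

variable [IsScalarTower k (MvPolynomial σ k) B] [Module.Finite (MvPolynomial σ k) B]

lemma relLength_top_ne_top [Finite σ] (h𝔟 : IsPFamily σ ℬ p 𝔟) (n : ℕ) :
    relLength ⊤ ((𝔟 n).restrictScalars k) ≠ ⊤ := by
  simpa using h𝔟.relLength_smul_ne_top (⊤ : Ideal B) n

end IsPFamily

section Grading

variable [IsScalarTower k (MvPolynomial σ k) B] {δ : σ → ℤ}

lemma algebraMap_monomial_mem (hX : ∀ i, algebraMap (MvPolynomial σ k) B (X i) ∈ ℬ (δ i))
    (e : σ →₀ ℕ) (c : k) :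
    algebraMap (MvPolynomial σ k) B (monomial e c) ∈ ℬ (Finsupp.weight δ e) := by
  rw [← mul_one c, ← smul_eq_mul, ← smul_monomial, Algebra.algebraMap_eq_smul_one, smul_assoc,
    ← Algebra.algebraMap_eq_smul_one]
  refine Submodule.smul_mem _ c ?_
  induction e using Finsupp.induction_linear with
  | zero => simpa using SetLike.GradedOne.one_mem
  | add e e' he he' =>
    rw [map_add, ← mul_one 1, ← monomial_mul, map_mul]
    exact SetLike.mul_mem_graded he he'
  | single i m =>
    rw [Finsupp.weight_single, ← X_pow_eq_monomial, map_pow]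
    exact SetLike.pow_mem_graded m (hX i)

lemma abs_weight_le [Fintype σ] (δ : σ → ℤ) {e : σ →₀ ℕ} {Q : ℕ} (he : ∀ i, e i ≤ Q) :
    |Finsupp.weight δ e| ≤ (∑ i, (δ i).natAbs : ℕ) * Q := by
  rw [Finsupp.weight_apply, Finsupp.sum_fintype _ _ (by simp), Nat.cast_sum, Finset.sum_mul]
  refine (Finset.abs_sum_le_sum_abs _ _).trans (Finset.sum_le_sum fun i _ => ?_)
  rw [nsmul_eq_mul, abs_mul, Nat.abs_cast, Int.natCast_natAbs, mul_comm]
  gcongr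
  exact he i

variable [Finite σ] [Module.Finite (MvPolynomial σ k) B]

lemma exists_forall_graded_le_of_map_varPow_le
    (hX : ∀ i, algebraMap (MvPolynomial σ k) B (X i) ∈ ℬ (δ i)) :
    ∃ D E : ℕ, ∀ (Q : ℕ) (J : Ideal B), J.IsHomogeneous ℬ →
      (varPow σ k Q).map (algebraMap (MvPolynomial σ k) B) ≤ J →
      ∀ j : ℤ, D * Q + E < |j| → ℬ j ≤ J.restrictScalars k := by
  cases nonempty_fintype σ
  obtain ⟨s, hs, hspan⟩ := exists_finset_homogeneous_span_eq_top (MvPolynomial σ k) ℬ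
  choose γ hγ using fun m : s => hs m m.2
  refine ⟨∑ i, (δ i).natAbs, ∑ m, (γ m).natAbs, fun Q J hJ hQJ j hj => ?_⟩
  let v (a : ↥(Set.univ : Set (σ → Fin Q)) × s) : B := boxMonomial k a.1.1 • (a.2 : B)
  let w (b : σ → Fin Q) : ℤ := Finsupp.weight δ (boxExponent b)
  have hv (a) : v a ∈ ℬ (w a.1 + γ a.2) := by
    simp only [v, Algebra.smul_def]
    exact SetLike.mul_mem_graded (algebraMap_monomial_mem hX _ _) (hγ a.2)
  have hw (b : σ → Fin Q) : |w b| ≤ (∑ i, (δ i).natAbs : ℕ) * Q :=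
    abs_weight_le δ fun i => (b i).2.le
  refine graded_le_of_top_le_span_sup hv (W := J.restrictScalars k) (fun i x hx => hJ i hx) ?_ ?_
  · intro x _
    have hx : x ∈ Submodule.span (MvPolynomial σ k) (Set.range ((↑) : s → B)) := by
      simp [hspan]
    obtain ⟨c, rfl⟩ := (Submodule.mem_span_range_iff_exists_fun _).1 hx
    refine sum_mem fun m _ => ?_
    let φ := (LinearMap.toSpanSingleton (MvPolynomial σ k) B m).restrictScalars k
    suffices Submodule.span k (Set.range fun b : (Set.univ : Set (σ → Fin Q)) =>
        boxMonomial k b.1) ⊔ (varPow σ k Q).restrictScalars k ≤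
          (Submodule.span k (Set.range v) ⊔ J.restrictScalars k).comap φ from
      this (mem_span_boxMonomial_sup_varPow (c m) Set.univ fun _ _ => trivial)
    refine sup_le (Submodule.span_le.2 ?_) fun q hq => ?_
    · rintro _ ⟨b, rfl⟩
      exact Submodule.mem_sup_left (Submodule.subset_span ⟨(b, m), rfl⟩)
    · refine Submodule.mem_sup_right ?_
      change q • (m : B) ∈ J
      rw [Algebra.smul_def]
      exact J.mul_mem_right _ (hQJ (Ideal.mem_map_of_mem _ hq))
  · rintro a rfl
    have hγa : |γ a.2| ≤ (∑ m, (γ m).natAbs : ℕ) := by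
      rw [Int.abs_eq_natAbs]
      exact_mod_cast Finset.single_le_sum (f := fun m => (γ m).natAbs) (by simp) (Finset.mem_univ _)
    linarith [abs_add_le (w a.1) (γ a.2), hw a.1]

lemma IsPFamily.hasDilatedSupport {𝔟 : ℕ → Ideal B} (h𝔟 : IsPFamily σ ℬ p 𝔟) (hp : 0 < p)
    (hX : ∀ i, algebraMap (MvPolynomial σ k) B (X i) ∈ ℬ (δ i)) :
    HasDilatedSupport p fun n => hilbertFun ℬ ⊤ ((𝔟 n).restrictScalars k) := by
  obtain ⟨c, -, hle⟩ := h𝔟.exists_map_varPow_le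
  obtain ⟨D, E, hDE⟩ := exists_forall_graded_le_of_map_varPow_le hX
  refine ⟨D * c + E, fun n j hj => not_lt.1 fun hlt => ?_⟩
  have hE : (E : ℤ) ≤ E * p ^ n := by
    exact_mod_cast Nat.le_mul_of_pos_right E (Nat.pow_pos hp)
  have hjJ := hDE _ _ (h𝔟.isHomogeneous n) (hle n) j (by push_cast at hlt ⊢; linarith)
  rw [Finsupp.mem_support_iff, ← Nat.cast_ne_zero (R := ℕ∞),
    coe_hilbertFun_apply (h𝔟.isHomogeneous n) (h𝔟.relLength_top_ne_top n), top_inf_eq] at hj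
  exact hj (relLength_eq_zero_iff.2 hjJ)

end Grading

end PFamily

section FrobeniusRecursion

open MvPolynomial Topology

variable {k σ B : Type*} [Field k] [CommRing B] [Algebra k B] [Algebra (MvPolynomial σ k) B]
  [Fintype σ] {p : ℕ} [ExpChar k p] [ExpChar B p]

/-- The twisted Frobenius `b ↦ X ^ a * b ^ p`. -/
def boxFrobenius (a : σ → Fin p) : B →ₛₗ[frobenius k p] B :=
  (LinearMap.mulLeft k (algebraMap (MvPolynomial σ k) B (boxMonomial k a))).comp
    (LinearMap.frobenius k B p)

lemma boxFrobenius_apply (a : σ → Fin p) (b : B) :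
    boxFrobenius (k := k) a b = algebraMap (MvPolynomial σ k) B (boxMonomial k a) * b ^ p :=
  rfl

lemma monomial_smul_pow [NeZero p] (e : σ →₀ ℕ) (c : k) (b : B) : ∃ (a : σ → Fin p) (e' : σ →₀ ℕ),
    monomial e c • b ^ p = algebraMap (MvPolynomial σ k) B (C c) *
      boxFrobenius (k := k) a (algebraMap (MvPolynomial σ k) B (monomial e' 1) * b) := by
  refine ⟨fun i => Fin.ofNat p (e i), Finsupp.equivFunOnFinite.symm fun i => e i / p, ?_⟩
  have he : e = boxExponent (fun i => Fin.ofNat p (e i)) +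
      p • Finsupp.equivFunOnFinite.symm fun i => e i / p := by
    ext i
    simp [boxExponent, Nat.mod_add_div]
  have hmon : monomial e c = C c * (boxMonomial k (fun i => Fin.ofNat p (e i)) *
      monomial (Finsupp.equivFunOnFinite.symm fun i => e i / p) 1 ^ p) := by
    rw [boxMonomial, monomial_pow, monomial_mul, ← he, C_mul_monomial, one_pow, mul_one, mul_one]
  rw [boxFrobenius_apply, hmon, Algebra.smul_def, map_mul, map_mul, map_pow, mul_pow]
  ring

variable {ℬ : ℤ → Submodule k B} [GradedAlgebra ℬ]

/-- The images of the homogeneous elements of `B` under the maps `boxFrobenius a`. -/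
def homogeneousBoxFrobenius (ℬ : ℤ → Submodule k B) (x : (σ → Fin p) × Σ i, ℬ i) : B :=
  boxFrobenius (k := k) x.1 x.2.2

lemma boxFrobenius_mem_span (a : σ → Fin p) (b : B) :
    boxFrobenius (k := k) a b ∈
      Submodule.span k (Set.range (homogeneousBoxFrobenius (σ := σ) (p := p) ℬ)) := by
  classical
  rw [← DirectSum.sum_support_decompose ℬ b, map_sum]
  exact sum_mem fun i _ => Submodule.subset_span ⟨(a, ⟨i, DirectSum.decompose ℬ b i⟩), rfl⟩

variable [IsScalarTower k (MvPolynomial σ k) B] {δ : σ → ℤ}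

lemma homogeneousBoxFrobenius_mem
    (hX : ∀ i, algebraMap (MvPolynomial σ k) B (X i) ∈ ℬ (δ i)) (x : (σ → Fin p) × Σ i, ℬ i) :
    homogeneousBoxFrobenius ℬ x ∈ ℬ (p * x.2.1 + Finsupp.weight δ (boxExponent x.1)) := by
  rw [homogeneousBoxFrobenius, boxFrobenius_apply, add_comm, ← nsmul_eq_mul]
  exact SetLike.mul_mem_graded (algebraMap_monomial_mem hX _ _) (SetLike.pow_mem_graded p x.2.2.2)

variable (ℬ) in
lemma restrictScalars_powSpan_top [NeZero p] :
    (powSpan p (⊤ : Submodule (MvPolynomial σ k) B)).restrictScalars k =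
      Submodule.span k (Set.range (homogeneousBoxFrobenius (σ := σ) (p := p) ℬ)) := by
  apply le_antisymm
  · intro x hx
    change x ∈ Submodule.span _ _ at hx
    induction hx using Submodule.closure_induction with
    | zero => exact zero_mem _
    | add x y _ _ hx hy => exact add_mem hx hy
    | smul_mem P x hx' =>
      obtain ⟨b, -, rfl⟩ := hx'
      dsimp only
      rw [P.as_sum, Finset.sum_smul]
      refine sum_mem fun e _ => ?_
      obtain ⟨a, e', h⟩ := monomial_smul_pow (p := p) e (P.coeff e) b
      rw [h, ← MvPolynomial.algebraMap_eq, ← IsScalarTower.algebraMap_apply, ← Algebra.smul_def]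
      exact Submodule.smul_mem _ _ (boxFrobenius_mem_span a _)
  · rw [Submodule.span_le]
    rintro _ ⟨⟨a, i, b⟩, rfl⟩
    change boxFrobenius a (b : B) ∈ powSpan p ⊤
    rw [boxFrobenius_apply, ← Algebra.smul_def]
    exact Submodule.smul_mem _ _ (Submodule.subset_span ⟨b, trivial, rfl⟩)

omit [Fintype σ] in
lemma isHomogeneous_powSpan_top [Finite σ] [NeZero p]
    (hX : ∀ i, algebraMap (MvPolynomial σ k) B (X i) ∈ ℬ (δ i)) :
    ((powSpan p (⊤ : Submodule (MvPolynomial σ k) B)).restrictScalars k).IsHomogeneous ℬ := by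
  cases nonempty_fintype σ
  rw [restrictScalars_powSpan_top ℬ]
  exact isHomogeneous_span_range (homogeneousBoxFrobenius_mem hX)

variable [DecidableEq σ]

lemma powSpan_top_inf_le [NeZero p]
    (hX : ∀ i, algebraMap (MvPolynomial σ k) B (X i) ∈ ℬ (δ i)) {J J' : Ideal B}
    (hJ : ∀ b ∈ J, b ^ p ∈ J') {s : Finset ℤ} (hs : ∀ i ∉ s, ℬ i ≤ J.restrictScalars k) (j : ℤ) :
    (powSpan p (⊤ : Submodule (MvPolynomial σ k) B)).restrictScalars k ⊓ ℬ j ≤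
      (({x ∈ (Finset.univ : Finset (σ → Fin p)) ×ˢ s |
          p * x.2 + Finsupp.weight δ (boxExponent x.1) = j}).sup fun x =>
        Submodule.span k (boxFrobenius (k := k) x.1 '' (ℬ x.2 : Set B))) ⊔
          J'.restrictScalars k := by
  rw [restrictScalars_powSpan_top ℬ, inf_comm]
  refine (inf_span_range_le (homogeneousBoxFrobenius_mem hX) j).trans (Submodule.span_le.2 ?_)
  rintro _ ⟨⟨a, i, b⟩, hx, rfl⟩
  by_cases hi : i ∈ s
  · have hT : (a, i) ∈ ({x ∈ (Finset.univ : Finset (σ → Fin p)) ×ˢ s |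
        p * x.2 + Finsupp.weight δ (boxExponent x.1) = j}) := by
      simpa [hi] using hx
    exact Submodule.mem_sup_left (Finset.le_sup
      (f := fun x => Submodule.span k (boxFrobenius (k := k) x.1 '' (ℬ x.2 : Set B))) hT
      (Submodule.subset_span ⟨b, b.2, rfl⟩))
  · exact Submodule.mem_sup_right (J'.mul_mem_left _ (hJ b (hs i hi b.2)))

lemma hilbertFun_powSpan_top_le [NeZero p]
    (hX : ∀ i, algebraMap (MvPolynomial σ k) B (X i) ∈ ℬ (δ i)) {J J' : Ideal B}
    (hJ : J.IsHomogeneous ℬ) (hJ' : J'.IsHomogeneous ℬ)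
    (hfin : relLength ⊤ (J.restrictScalars k) ≠ ⊤) (hfin' : relLength ⊤ (J'.restrictScalars k) ≠ ⊤)
    (hpow : ∀ b ∈ J, b ^ p ∈ J') :
    hilbertFun ℬ ((powSpan p (⊤ : Submodule (MvPolynomial σ k) B)).restrictScalars k)
        (J'.restrictScalars k) ≤
      frobeniusTransform p (fun a : σ → Fin p => Finsupp.weight δ (boxExponent a))
        (hilbertFun ℬ ⊤ (J.restrictScalars k)) := by
  intro j
  set h := hilbertFun ℬ ⊤ (J.restrictScalars k)
  set T : Finset ((σ → Fin p) × ℤ) := {x ∈ Finset.univ ×ˢ h.support |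
    p * x.2 + Finsupp.weight δ (boxExponent x.1) = j} with hT
  have hh (i : ℤ) : (h i : ℕ∞) = relLength (ℬ i) (J.restrictScalars k) := by
    rw [coe_hilbertFun_apply hJ hfin, top_inf_eq]
  have hsupp (i : ℤ) (hi : i ∉ h.support) : ℬ i ≤ J.restrictScalars k := by
    rw [← relLength_eq_zero_iff, ← hh, Finsupp.notMem_support_iff.1 hi, Nat.cast_zero]
  have htransform : frobeniusTransform p
      (fun a : σ → Fin p => Finsupp.weight δ (boxExponent a)) h j = ∑ x ∈ T, h x.2 := by
    simp [frobeniusTransform, hT, Finset.sum_filter, Finset.sum_product, Finsupp.mapDomain,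
      Finsupp.sum, Finsupp.finsetSum_apply, Finsupp.single_apply]
  rw [← Nat.cast_le (α := ℕ∞), htransform, Nat.cast_sum,
    coe_hilbertFun_apply hJ' (ne_top_of_le_ne_top hfin' (relLength_mono_left _ le_top))]
  calc relLength _ (J'.restrictScalars k)
      ≤ relLength ((T.sup fun x =>
            Submodule.span k (boxFrobenius (k := k) x.1 '' (ℬ x.2 : Set B))) ⊔
          J'.restrictScalars k) (J'.restrictScalars k) :=
        relLength_mono_left _ (powSpan_top_inf_le hX hpow hsupp j)
    _ ≤ ∑ x ∈ T, relLength (Submodule.span k (boxFrobenius (k := k) x.1 '' (ℬ x.2 : Set B)))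
          (J'.restrictScalars k) :=
        (relLength_sup_right_self _ _).trans_le (relLength_finset_sup_le _ _ _)
    _ ≤ ∑ x ∈ T, (h x.2 : ℕ∞) := Finset.sum_le_sum fun x _ => by
        rw [hh]
        exact relLength_span_image_le _ _ _ fun b hb => J'.mul_mem_left _ (hpow b hb)

omit [DecidableEq σ] in
theorem IsPFamily.exists_tendsto_normSum [Fact p.Prime] [Module.Finite (MvPolynomial σ k) B]
    {𝔟 : ℕ → Ideal B} (h𝔟 : IsPFamily σ ℬ p 𝔟)
    (hX : ∀ i, algebraMap (MvPolynomial σ k) B (X i) ∈ ℬ (δ i)) {f : MvPolynomial σ k} (hf : f ≠ 0)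
    (hfB : ∀ b : B, f • b ∈ powSpan p (⊤ : Submodule (MvPolynomial σ k) B)) :
    ∃ F, Tendsto (normSum p (Fintype.card σ) fun n =>
      hilbertFun ℬ ⊤ ((𝔟 n).restrictScalars k)) atTop (𝓝 F) := by
  classical
  have hp : p.Prime := Fact.out
  refine exists_tendsto_normSum_of_frobeniusTransform hp.one_lt
    (fun a : σ → Fin p => Finsupp.weight δ (boxExponent a)) (by simp)
    (h𝔟.hasDilatedSupport hp.pos hX) ?_
  have hF := isHomogeneous_powSpan_top (p := p) hX
  set F := (powSpan p (⊤ : Submodule (MvPolynomial σ k) B)).restrictScalars k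
  have herror : IsNegligible p (Fintype.card σ) fun n =>
      (hilbertFun ℬ ⊤ (F ⊔ (𝔟 n).restrictScalars k)).degree := by
    obtain ⟨C, hC⟩ := h𝔟.exists_relLength_mul_pow_le (⊤ : Submodule B B) hf
    refine ⟨C, fun n => ?_⟩
    rw [← Nat.cast_le (α := ℕ∞), Nat.cast_mul,
      coe_degree_hilbertFun (fun _ _ _ => Submodule.mem_top)
        (isHomogeneous_sup hF (h𝔟.isHomogeneous n)) (ne_top_of_le_ne_top
        (h𝔟.relLength_top_ne_top n) (relLength_anti_right _ le_sup_right))]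
    exact hC n _ (by simp) fun b _ => Submodule.mem_sup_left (hfB b)
  refine (herror.comp_succ hp.pos).mono fun n => Finsupp.degree_mono (tsub_le_iff_left.2 ?_)
  calc hilbertFun ℬ ⊤ ((𝔟 (n + 1)).restrictScalars k)
      ≤ hilbertFun ℬ F ((𝔟 (n + 1)).restrictScalars k) +
          hilbertFun ℬ ⊤ (F ⊔ (𝔟 (n + 1)).restrictScalars k) :=
        hilbertFun_le_add hF (h𝔟.isHomogeneous _) le_top (h𝔟.relLength_top_ne_top _)
    _ ≤ _ := by
        gcongr
        exact hilbertFun_powSpan_top_le hX (h𝔟.isHomogeneous n) (h𝔟.isHomogeneous (n + 1))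
          (h𝔟.relLength_top_ne_top _) (h𝔟.relLength_top_ne_top _) (h𝔟.pow_mem n)

end FrobeniusRecursion

section Module

open MvPolynomial Topology

section CyclicExtension

variable {B V : Type*} [CommRing B] [AddCommGroup V] [Module B V]

lemma comap_toSpanSingleton_sup_smul (N : Submodule B V) (m : V) (𝔟 : Ideal B) :
    (N ⊔ 𝔟 • (N ⊔ Submodule.span B {m})).comap (LinearMap.toSpanSingleton B V m) =
      N.comap (LinearMap.toSpanSingleton B V m) ⊔ 𝔟 := by
  rw [Submodule.smul_sup, ← sup_assoc, sup_eq_left.2 (Submodule.smul_le_right : 𝔟 • N ≤ N)]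
  apply le_antisymm
  · intro b hb
    obtain ⟨y, hy, z, hz, hyz⟩ := Submodule.mem_sup.1 hb
    obtain ⟨c, hc, rfl⟩ := Submodule.mem_smul_span_singleton.1 hz
    refine Submodule.mem_sup.2 ⟨b - c, ?_, c, hc, sub_add_cancel b c⟩
    rwa [Submodule.mem_comap, map_sub, LinearMap.toSpanSingleton_apply,
      LinearMap.toSpanSingleton_apply, sub_eq_of_eq_add (by simpa using hyz.symm)]
  · refine sup_le (Submodule.comap_mono le_sup_left) fun b hb => Submodule.mem_sup_right ?_
    exact Submodule.smul_mem_smul hb (Submodule.mem_span_singleton_self m)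

variable {k : Type*} [Field k] [Algebra k B] [Module k V] [IsScalarTower k B V]

lemma relLength_sup_span_singleton {N W : Submodule B V} (hNW : N ≤ W) (m : V) :
    relLength ((N ⊔ Submodule.span B {m}).restrictScalars k) (W.restrictScalars k) =
      relLength ⊤ ((W.comap (LinearMap.toSpanSingleton B V m)).restrictScalars k) := by
  have hspan : ((Submodule.span B {m}).restrictScalars k) =
      Submodule.map ((LinearMap.toSpanSingleton B V m).restrictScalars k) ⊤ := by
    ext x
    simp [Submodule.mem_span_singleton]
  refine (le_antisymm ?_ ?_ : _ = relLength ((Submodule.span B {m}).restrictScalars k)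
    (W.restrictScalars k)).trans ?_
  · refine (relLength_mono_left _ ?_).trans_eq (relLength_sup_right_self _ (W.restrictScalars k))
    rw [← Submodule.restrictScalars_sup]
    exact sup_le (hNW.trans le_sup_right) le_sup_left
  · exact relLength_mono_left _ fun x hx => Submodule.mem_sup_right hx
  · rw [hspan, relLength_map_left]
    rfl

lemma relLength_sup_span_singleton_eq_add (N : Submodule B V) (m : V) (𝔟 : Ideal B) :
    relLength ((N ⊔ Submodule.span B {m}).restrictScalars k)
        ((𝔟 • (N ⊔ Submodule.span B {m})).restrictScalars k) =
      relLength (N.restrictScalars k)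
          ((𝔟 • (N ⊔ Submodule.span B {m})).restrictScalars k) +
        relLength ⊤
          ((N.comap (LinearMap.toSpanSingleton B V m) ⊔ 𝔟).restrictScalars k) := by
  rw [← comap_toSpanSingleton_sup_smul, ← relLength_sup_span_singleton le_sup_left,
    Submodule.restrictScalars_sup k N (𝔟 • (N ⊔ Submodule.span B {m}))]
  exact relLength_eq_add (U := (N ⊔ Submodule.span B {m}).restrictScalars k)
    (U' := N.restrictScalars k) _ (Submodule.restrictScalars_mono k le_sup_left)

end CyclicExtension

section Grading

variable {k B V : Type*} [Field k] [CommRing B] [Algebra k B] [AddCommGroup V] [Module k V]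
  [Module B V] {ℬ : ℤ → Submodule k B} [GradedAlgebra ℬ] {ℳ : ℤ → Submodule k V}
  [DirectSum.Decomposition ℳ] [SetLike.GradedSMul ℬ ℳ] {m : V} {μ : ℤ}

variable (ℬ) in
lemma coe_decompose_smul_of_mem (hm : m ∈ ℳ μ) (b : B) (i : ℤ) :
    (DirectSum.decompose ℳ (b • m) (i + μ) : V) = (DirectSum.decompose ℬ b i : B) • m := by
  induction b using DirectSum.Decomposition.inductionOn ℬ with
  | zero => simp
  | @homogeneous i' b =>
    have hbm : (b : B) • m ∈ ℳ (i' + μ) := SetLike.GradedSMul.smul_mem b.2 hm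
    by_cases hi : i' = i
    · subst hi
      rw [DirectSum.decompose_of_mem_same ℳ hbm, DirectSum.decompose_of_mem_same ℬ b.2]
    · rw [DirectSum.decompose_of_mem_ne ℳ hbm (by simpa using hi),
        DirectSum.decompose_of_mem_ne ℬ b.2 hi, zero_smul]
  | add b c hb hc => simp [add_smul, hb, hc]

lemma isHomogeneous_comap_toSpanSingleton (hm : m ∈ ℳ μ) {N : Submodule B V}
    (hN : N.IsHomogeneous ℳ) :
    Ideal.IsHomogeneous ℬ (N.comap (LinearMap.toSpanSingleton B V m)) := by
  intro i b hb
  rw [Submodule.mem_comap, LinearMap.toSpanSingleton_apply, ← coe_decompose_smul_of_mem ℬ hm]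
  exact hN (i + μ) hb

variable (ℬ) in
include ℬ in
lemma isHomogeneous_sup_span_singleton (hm : m ∈ ℳ μ) {N : Submodule B V}
    (hN : N.IsHomogeneous ℳ) : (N ⊔ Submodule.span B {m}).IsHomogeneous ℳ :=
  isHomogeneous_sup hN (isHomogeneous_span (𝒜 := ℬ) (by rintro _ rfl; exact ⟨μ, hm⟩))

variable [IsScalarTower k B V]

lemma hilbertFun_sup_span_singleton_le (hm : m ∈ ℳ μ) {N W : Submodule B V} (hN : N.IsHomogeneous ℳ)
    (hW : W.IsHomogeneous ℳ) (hNW : N ≤ W)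
    (hfin : relLength ((N ⊔ Submodule.span B {m}).restrictScalars k) (W.restrictScalars k) ≠ ⊤) :
    hilbertFun ℳ ((N ⊔ Submodule.span B {m}).restrictScalars k) (W.restrictScalars k) ≤
      (hilbertFun ℬ ⊤ ((W.comap (LinearMap.toSpanSingleton B V m)).restrictScalars k)).mapDomain
        (· + μ) := by
  intro j
  obtain ⟨i, rfl⟩ : ∃ i, j = i + μ := ⟨j - μ, by ring⟩
  let φ := (LinearMap.toSpanSingleton B V m).restrictScalars k
  have hpiece : (N ⊔ Submodule.span B {m}).restrictScalars k ⊓ ℳ (i + μ) ≤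
      (ℬ i).map φ ⊔ W.restrictScalars k := by
    rintro x ⟨hx, hxi⟩
    obtain ⟨y, hy, z, hz, rfl⟩ := Submodule.mem_sup.1 hx
    obtain ⟨b, rfl⟩ := Submodule.mem_span_singleton.1 hz
    rw [← DirectSum.decompose_of_mem_same ℳ hxi, DirectSum.decompose_add, DirectSum.add_apply,
      AddMemClass.coe_add, coe_decompose_smul_of_mem ℬ hm, add_comm]
    exact Submodule.add_mem_sup ⟨_, SetLike.coe_mem _, rfl⟩ (hNW (hN _ hy))
  rw [Finsupp.mapDomain_apply (add_left_injective μ), ← Nat.cast_le (α := ℕ∞),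
    coe_hilbertFun_apply hW hfin, coe_hilbertFun_apply (isHomogeneous_comap_toSpanSingleton hm hW)
      (by rwa [← relLength_sup_span_singleton hNW]), top_inf_eq]
  calc _ ≤ relLength ((ℬ i).map φ ⊔ W.restrictScalars k) (W.restrictScalars k) :=
        relLength_mono_left _ hpiece
    _ = _ := (relLength_sup_right_self _ _).trans (relLength_map_left φ _ _)

end Grading

variable {k σ B V : Type*} [Field k] [CommRing B] [Algebra k B]
  [Algebra (MvPolynomial σ k) B] {ℬ : ℤ → Submodule k B} [GradedAlgebra ℬ]
  [AddCommGroup V] [Module k V] [Module (MvPolynomial σ k) V] [Module B V]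
  [IsScalarTower (MvPolynomial σ k) B V] [IsScalarTower k (MvPolynomial σ k) V]
  [IsScalarTower k B V] [Module.Finite (MvPolynomial σ k) V]
  {p : ℕ} {𝔟 : ℕ → Ideal B}

/-- The Hilbert functions of the quotients `N / 𝔟 n • N`. -/
def hilbertFunSeq (ℳ : ℤ → Submodule k V) (𝔟 : ℕ → Ideal B) (N : Submodule B V) (n : ℕ) : ℤ →₀ ℕ :=
  hilbertFun ℳ (N.restrictScalars k) ((𝔟 n • N).restrictScalars k)

variable {ℳ : ℤ → Submodule k V} [DirectSum.Decomposition ℳ] [SetLike.GradedSMul ℬ ℳ]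
  {N : Submodule B V} {m : V} {μ : ℤ} {f : MvPolynomial σ k}

lemma IsPFamily.coe_degree_hilbertFunSeq [Finite σ] (h𝔟 : IsPFamily σ ℬ p 𝔟)
    (hN : N.IsHomogeneous ℳ) (n : ℕ) :
    ((hilbertFunSeq ℳ 𝔟 N n).degree : ℕ∞) =
      relLength (N.restrictScalars k) ((𝔟 n • N).restrictScalars k) :=
  coe_degree_hilbertFun hN (isHomogeneous_smul (h𝔟.isHomogeneous n) hN)
    (h𝔟.relLength_smul_ne_top N n)

lemma IsPFamily.hilbertFunSeq_sup_span_singleton_le [Finite σ] (h𝔟 : IsPFamily σ ℬ p 𝔟)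
    (hN : N.IsHomogeneous ℳ) (hm : m ∈ ℳ μ) (n : ℕ) :
    hilbertFunSeq ℳ 𝔟 (N ⊔ Submodule.span B {m}) n ≤ hilbertFunSeq ℳ 𝔟 N n +
      (hilbertFun ℬ ⊤
        ((N.comap (LinearMap.toSpanSingleton B V m) ⊔ 𝔟 n).restrictScalars k)).mapDomain
        (· + μ) := by
  have hN' := isHomogeneous_sup_span_singleton ℬ hm hN
  set N' := N ⊔ Submodule.span B {m}
  have hbN' := isHomogeneous_smul (h𝔟.isHomogeneous n) hN'
  have hW := isHomogeneous_sup hN hbN'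
  have hfin := h𝔟.relLength_smul_ne_top N' n
  have hadd := hilbertFun_le_add (F := N.restrictScalars k) (U := N'.restrictScalars k) hN hbN'
    (Submodule.restrictScalars_mono k le_sup_left) hfin
  rw [← Submodule.restrictScalars_sup] at hadd
  calc hilbertFunSeq ℳ 𝔟 N' n
      ≤ hilbertFun ℳ (N.restrictScalars k) ((𝔟 n • N').restrictScalars k) +
          hilbertFun ℳ (N'.restrictScalars k) ((N ⊔ 𝔟 n • N').restrictScalars k) := hadd
    _ ≤ _ := by
        gcongr
        · exact hilbertFun_anti_right hbN' (isHomogeneous_smul (h𝔟.isHomogeneous n) hN)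
            (Submodule.restrictScalars_mono k (Submodule.smul_mono le_rfl le_sup_left))
            (h𝔟.relLength_smul_ne_top N n)
        · rw [← comap_toSpanSingleton_sup_smul]
          exact hilbertFun_sup_span_singleton_le hm hN hW le_sup_left
            (ne_top_of_le_ne_top hfin
              (relLength_anti_right _ fun x hx => Submodule.mem_sup_right hx))

variable [Fintype σ] [Module.Finite (MvPolynomial σ k) B] [Fact p.Prime] [CharP B p]

-- If `b • m ∈ N`, then `s • b = b * u` with `u • m ∈ N`, so `s` kills the image of
-- `N ⊓ 𝔟 n • (N ⊔ B m)` in `N / 𝔟 n • N`, where its kernel is as long as its cokernel.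
lemma IsPFamily.exists_relLength_inf_mul_pow_le (h𝔟 : IsPFamily σ ℬ p 𝔟) (hf : f ≠ 0)
    (hfB : ∀ b : B, f • b ∈ powSpan p (⊤ : Submodule (MvPolynomial σ k) B)) (N : Submodule B V)
    (m : V) : ∃ C : ℕ, ∀ n,
      relLength ((N ⊓ 𝔟 n • (N ⊔ Submodule.span B {m})).restrictScalars k)
          ((𝔟 n • N).restrictScalars k) * (p ^ n : ℕ) ≤ (C * (p ^ n) ^ Fintype.card σ : ℕ) := by
  obtain ⟨s, hs, u, hu, hsu⟩ := exists_algebraMap_sub_mul_eq_zero hf hfB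
    (N.comap (LinearMap.toSpanSingleton B V m))
  obtain ⟨C, hC⟩ := h𝔟.exists_relLength_mul_pow_le N hs
  refine ⟨C, fun n => le_trans ?_ (hC n (Submodule.map (Algebra.lsmul k k V s)
    (N.restrictScalars k) ⊔ (𝔟 n • N).restrictScalars k) le_sup_right
      fun v hv => Submodule.mem_sup_left ⟨v, hv, rfl⟩)⟩
  have hstable (P : Submodule B V) :
      Submodule.map (Algebra.lsmul k k V s) (P.restrictScalars k) ≤ P.restrictScalars k := by
    rintro _ ⟨v, hv, rfl⟩
    exact (P.restrictScalars (MvPolynomial σ k)).smul_mem s hv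
  have hsmul : (N ⊓ 𝔟 n • (N ⊔ Submodule.span B {m})).restrictScalars k ≤ N.restrictScalars k ⊓
      ((𝔟 n • N).restrictScalars k).comap (Algebra.lsmul k k V s) := by
    rintro x ⟨hxN, hx⟩
    refine ⟨hxN, ?_⟩
    rw [SetLike.mem_coe, Submodule.smul_sup] at hx
    obtain ⟨y, hy, z, hz, rfl⟩ := Submodule.mem_sup.1 hx
    obtain ⟨b, hb, rfl⟩ := Submodule.mem_smul_span_singleton.1 hz
    have hbJ : b • m ∈ N := (add_mem_cancel_left (Submodule.smul_le_right hy)).1 hxN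
    have hsb : algebraMap _ B s * b = b * u := by
      rw [← sub_eq_zero, mul_comm b, ← sub_mul, hsu b hbJ]
    change s • (y + b • m) ∈ 𝔟 n • N
    rw [smul_add, ← algebraMap_smul B s (b • m), smul_smul, hsb, mul_smul]
    exact add_mem (hstable (𝔟 n • N) ⟨y, hy, rfl⟩) (Submodule.smul_mem_smul hb hu)
  gcongr
  exact (relLength_mono_left _ hsmul).trans (relLength_inf_comap_le _ (hstable N) (hstable _)
    (h𝔟.relLength_smul_ne_top N n))

variable [IsScalarTower k (MvPolynomial σ k) B]

lemma IsPFamily.isNegligible_degree_hilbertFunSeq_sup (h𝔟 : IsPFamily σ ℬ p 𝔟) (hf : f ≠ 0)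
    (hfB : ∀ b : B, f • b ∈ powSpan p (⊤ : Submodule (MvPolynomial σ k) B))
    (hN : N.IsHomogeneous ℳ) (hm : m ∈ ℳ μ) : IsNegligible p (Fintype.card σ) fun n =>
      (hilbertFunSeq ℳ 𝔟 N n).degree +
        (hilbertFun ℬ ⊤
          ((N.comap (LinearMap.toSpanSingleton B V m) ⊔ 𝔟 n).restrictScalars k)).degree -
        (hilbertFunSeq ℳ 𝔟 (N ⊔ Submodule.span B {m}) n).degree := by
  have hN' := isHomogeneous_sup_span_singleton ℬ hm hN
  have hJ := isHomogeneous_comap_toSpanSingleton (ℬ := ℬ) hm hN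
  obtain ⟨C, hC⟩ := h𝔟.exists_relLength_inf_mul_pow_le hf hfB N m
  refine ⟨C, fun n => ?_⟩
  set N' := N ⊔ Submodule.span B {m}
  set J := N.comap (LinearMap.toSpanSingleton B V m)
  have hcyclic : ((hilbertFun ℬ ⊤ ((J ⊔ 𝔟 n).restrictScalars k)).degree : ℕ∞) =
      relLength ⊤ ((J ⊔ 𝔟 n).restrictScalars k) :=
    coe_degree_hilbertFun (fun _ _ _ => Submodule.mem_top) ((h𝔟.sup hJ).isHomogeneous n)
      ((h𝔟.sup hJ).relLength_top_ne_top n)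
  have hdeg : (hilbertFunSeq ℳ 𝔟 N n).degree +
      (hilbertFun ℬ ⊤ ((J ⊔ 𝔟 n).restrictScalars k)).degree ≤
      relLength ((N ⊓ 𝔟 n • N').restrictScalars k) ((𝔟 n • N).restrictScalars k) +
        (hilbertFunSeq ℳ 𝔟 N' n).degree := by
    rw [h𝔟.coe_degree_hilbertFunSeq hN, h𝔟.coe_degree_hilbertFunSeq hN', hcyclic,
      relLength_sup_span_singleton_eq_add, ← add_assoc, Submodule.restrictScalars_inf]
    gcongr
    exact relLength_le_relLength_inf_add (N.restrictScalars k) _ _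
  rw [← Nat.cast_le (α := ℕ∞), Nat.cast_mul, ENat.natCast_sub, Nat.cast_add]
  exact (mul_le_mul_left (tsub_le_iff_right.2 hdeg) _).trans (hC n)

variable [CharP k p] in
theorem IsPFamily.exists_tendsto_normSum_hilbertFunSeq_span {δ : σ → ℤ} (h𝔟 : IsPFamily σ ℬ p 𝔟)
    (hX : ∀ i, algebraMap (MvPolynomial σ k) B (X i) ∈ ℬ (δ i)) (hf : f ≠ 0)
    (hfB : ∀ b : B, f • b ∈ powSpan p (⊤ : Submodule (MvPolynomial σ k) B)) {s : Finset V}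
    (hs : ∀ m ∈ s, SetLike.IsHomogeneousElem ℳ m) :
    HasDilatedSupport p (hilbertFunSeq ℳ 𝔟 (Submodule.span B (s : Set V))) ∧
      ∃ F, Tendsto (normSum p (Fintype.card σ)
        (hilbertFunSeq ℳ 𝔟 (Submodule.span B (s : Set V)))) atTop (𝓝 F) := by
  classical
  have hp : p.Prime := Fact.out
  induction s using Finset.induction_on with
  | empty =>
    have h0 : hilbertFunSeq ℳ 𝔟 (Submodule.span B ((∅ : Finset V) : Set V)) = 0 :=
      funext fun n => hilbertFun_eq_zero (by simp)
    rw [h0, normSum_zero]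
    exact ⟨⟨0, fun n j hj => absurd rfl (Finsupp.mem_support_iff.1 hj)⟩, 0, tendsto_const_nhds⟩
  | insert m s _ ih =>
    obtain ⟨μ, hm⟩ := hs m (Finset.mem_insert_self m s)
    have hs' := fun x hx => hs x (Finset.mem_insert_of_mem hx)
    obtain ⟨hsupp, hlim⟩ := ih hs'
    have hN := isHomogeneous_span (R := B) (𝒜 := ℬ) (s := (s : Set V)) hs'
    have hJ := h𝔟.sup (isHomogeneous_comap_toSpanSingleton (ℬ := ℬ) hm hN)
    have hle := h𝔟.hilbertFunSeq_sup_span_singleton_le hN hm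
    rw [Finset.coe_insert, Submodule.span_insert, sup_comm]
    exact ⟨.of_le_add_mapDomain hp.ne_zero hsupp (hJ.hasDilatedSupport hp.pos hX) hle,
      exists_tendsto_normSum_of_le_add_mapDomain hp.one_lt μ hsupp
        (hJ.hasDilatedSupport hp.pos hX) hle
        (h𝔟.isNegligible_degree_hilbertFunSeq_sup hf hfB hN hm) hlim
        (hJ.exists_tendsto_normSum hX hf hfB)⟩

variable [CharP k p] in
theorem IsPFamily.exists_tendsto_normSum_hilbertFunSeq_top {δ : σ → ℤ} (h𝔟 : IsPFamily σ ℬ p 𝔟)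
    (hX : ∀ i, algebraMap (MvPolynomial σ k) B (X i) ∈ ℬ (δ i)) (hf : f ≠ 0)
    (hfB : ∀ b : B, f • b ∈ powSpan p (⊤ : Submodule (MvPolynomial σ k) B)) :
    ∃ F, Tendsto (normSum p (Fintype.card σ) (hilbertFunSeq ℳ 𝔟 ⊤)) atTop (𝓝 F) := by
  have : Module.Finite B V := .of_restrictScalars_finite (MvPolynomial σ k) B V
  obtain ⟨s, hs, hspan⟩ := exists_finset_homogeneous_span_eq_top B ℳ
  rw [← hspan]
  exact (h𝔟.exists_tendsto_normSum_hilbertFunSeq_span hX hf hfB hs).2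

end Module

section Parameters

section PrimeAvoidance

variable {R σ : Type*} [CommRing R] [SetLike σ R] {𝒜 : ℤ → σ} [SetLike.GradedMonoid 𝒜]

variable (𝒜) in
/-- The homogeneous elements of positive degree. -/
def positiveElements : Set R :=
  {x | ∃ t : ℤ, 0 < t ∧ x ∈ 𝒜 t}

lemma exists_mem_positiveElements_forall_mem {Q : Ideal R} (hQ : Q.IsPrime) {z : R}
    (hz : z ∈ positiveElements 𝒜) (hzQ : z ∉ Q) {S : Finset (Ideal R)}
    (hS : ∀ P ∈ S, ∃ r ∈ P, SetLike.IsHomogeneousElem 𝒜 r ∧ r ∉ Q) :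
    ∃ w ∈ positiveElements 𝒜, w ∉ Q ∧ ∀ P ∈ S, w ∈ P := by
  choose! r hrP hr hrQ using hS
  choose! t ht using hr
  obtain ⟨a, ha, hza⟩ := hz
  set N := (∑ P ∈ S, t P).natAbs + 1
  refine ⟨z ^ N * ∏ P ∈ S, r P, ⟨N • a + ∑ P ∈ S, t P, ?_, SetLike.mul_mem_graded
    (SetLike.pow_mem_graded N hza) (SetLike.prod_mem_graded _ _ _ ht)⟩, ?_, ?_⟩
  · have hN : (N : ℤ) ≤ N • a := by
      rw [nsmul_eq_mul]
      exact le_mul_of_one_le_right (by positivity) ha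
    omega
  · rw [hQ.mul_mem_iff_mem_or_mem, Ideal.IsPrime.prod_mem_iff]
    rintro (h | ⟨P, hP, h⟩)
    · exact hzQ (hQ.mem_of_pow_mem _ h)
    · exact hrQ P hP h
  · exact fun P hP => P.mul_mem_left _ (P.mem_of_dvd (Finset.dvd_prod_of_mem r hP) (hrP P hP))

variable [AddSubmonoidClass σ R]

lemma exists_pow_add_pow_mem_positiveElements {x w : R} (hx : x ∈ positiveElements 𝒜)
    (hw : w ∈ positiveElements 𝒜) :
    ∃ m n : ℕ, 0 < m ∧ 0 < n ∧ x ^ m + w ^ n ∈ positiveElements 𝒜 := by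
  obtain ⟨a, ha, hxa⟩ := hx
  obtain ⟨b, hb, hwb⟩ := hw
  lift a to ℕ using ha.le
  lift b to ℕ using hb.le
  rw [Nat.cast_pos] at ha hb
  refine ⟨b, a, hb, ha, (a * b : ℕ), by positivity, add_mem ?_ ?_⟩
  · simpa [mul_comm] using SetLike.pow_mem_graded b hxa
  · simpa using SetLike.pow_mem_graded a hwb

theorem exists_mem_positiveElements_forall_notMem {S : Finset (Ideal R)}
    (hS : ∀ P ∈ S, P.IsPrime) (h : ∀ P ∈ S, ¬ positiveElements 𝒜 ⊆ P) :
    ∃ x ∈ positiveElements 𝒜, ∀ P ∈ S, x ∉ P := by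
  classical
  induction S using Finset.induction_on with
  | empty => exact ⟨0, ⟨1, one_pos, zero_mem _⟩, by simp⟩
  | insert Q S _ ih =>
    rw [Finset.forall_mem_insert] at hS h
    obtain ⟨x, hx, hxS⟩ := ih hS.2 h.2
    by_cases hxQ : x ∈ Q
    swap
    · exact ⟨x, hx, Finset.forall_mem_insert .. |>.2 ⟨hxQ, hxS⟩⟩
    obtain ⟨z, hz, hzQ⟩ := Set.not_subset.1 h.1
    obtain ⟨w, hw, hwQ, hwS⟩ := exists_mem_positiveElements_forall_mem hS.1 hz hzQ
      (S := S.filter fun P => ∃ r ∈ P, SetLike.IsHomogeneousElem 𝒜 r ∧ r ∉ Q)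
      fun P hP => (Finset.mem_filter.1 hP).2
    obtain ⟨m, n, hm, hn, hy⟩ := exists_pow_add_pow_mem_positiveElements hx hw
    have hyQ : x ^ m + w ^ n ∉ Q := fun hmem =>
      hwQ (hS.1.mem_of_pow_mem n ((Q.add_mem_iff_right (Q.pow_mem_of_mem hxQ m hm)).1 hmem))
    refine ⟨_, hy, Finset.forall_mem_insert .. |>.2 ⟨hyQ, fun P hP hmem => ?_⟩⟩
    by_cases hPQ : ∃ r ∈ P, SetLike.IsHomogeneousElem 𝒜 r ∧ r ∉ Q
    · have hwP : w ^ n ∈ P := P.pow_mem_of_mem (hwS P (Finset.mem_filter.2 ⟨hP, hPQ⟩)) n hn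
      exact hxS P hP ((hS.2 P hP).mem_of_pow_mem m ((P.add_mem_iff_left hwP).1 hmem))
    · push Not at hPQ
      obtain ⟨t, -, ht⟩ := hy
      exact hyQ (hPQ _ hmem ⟨t, ht⟩)

end PrimeAvoidance

section KrullDim

variable {R : Type*} [CommRing R]

theorem ringKrullDim_quotient_sup_span_singleton_le {𝔞 : Ideal R} {x : R} {d : ℕ}
    (hd : ringKrullDim (R ⧸ 𝔞) ≤ (d + 1 : ℕ))
    (hx : ∀ Q ∈ 𝔞.minimalPrimes, ¬ Q.IsMaximal → x ∉ Q) :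
    ringKrullDim (R ⧸ (𝔞 ⊔ Ideal.span {x})) ≤ d := by
  rw [ringKrullDim_quotient] at hd ⊢
  refine iSup_le fun s => ?_
  have hsub : ∀ P ∈ PrimeSpectrum.zeroLocus ((𝔞 ⊔ Ideal.span {x} : Ideal R) : Set R),
      P ∈ PrimeSpectrum.zeroLocus (𝔞 : Set R) := fun P hP =>
    PrimeSpectrum.zeroLocus_anti_mono (SetLike.coe_subset_coe.2 le_sup_left) hP
  obtain ⟨Q, hQ, hQle⟩ := Ideal.exists_minimalPrimes_le (hsub _ s.head.2)
  by_cases hQmax : Q.IsMaximal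
  · have hzero : s.length = 0 := by
      by_contra hne
      have hlt : s.head.1.asIdeal < s.last.1.asIdeal :=
        s.strictMono (Fin.lt_def.2 (Nat.pos_of_ne_zero hne))
      exact (hQle.trans_lt hlt).ne (hQmax.eq_of_le s.last.1.isPrime.ne_top (hQle.trans hlt.le))
    rw [hzero]
    exact_mod_cast Nat.zero_le d
  · have hxs : x ∈ s.head.1.asIdeal :=
      s.head.2 (Ideal.mem_sup_right (Ideal.mem_span_singleton_self x))
    have hlt : Q < s.head.1.asIdeal := lt_of_le_of_ne hQle fun h => hx Q hQ hQmax (h ▸ hxs)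
    let s' : LTSeries (PrimeSpectrum.zeroLocus (𝔞 : Set R)) :=
      s.map (fun P => ⟨P.1, hsub P.1 P.2⟩) fun _ _ h => h
    have hle := (Order.LTSeries.length_le_krullDim (s'.cons ⟨⟨Q, hQ.1.1⟩, hQ.1.2⟩ hlt)).trans hd
    have hlen : 0 + s.length + 1 ≤ d + 1 := by exact_mod_cast hle
    exact_mod_cast (by omega : s.length ≤ d)

end KrullDim

section ConnectedGrading

variable {k R : Type*} [Field k] [CommRing R] [Algebra k R] {𝒜 : ℤ → Submodule k R}

/-- A `ℤ`-grading of a `k`-algebra is connected if it vanishes in negative degrees and its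
degree-zero piece is `k`; these are the `ℕ`-gradings with `R₀ = k`. -/
structure IsConnectedGrading (𝒜 : ℤ → Submodule k R) : Prop where
  eq_bot_of_neg : ∀ t < 0, 𝒜 t = ⊥
  exists_algebraMap_eq : ∀ x ∈ 𝒜 0, ∃ c, algebraMap k R c = x

variable [GradedAlgebra 𝒜]

lemma IsConnectedGrading.exists_sub_algebraMap_mem (h𝒜 : IsConnectedGrading 𝒜) {J : Ideal R}
    (hJ : positiveElements 𝒜 ⊆ J) (x : R) : ∃ c, x - algebraMap k R c ∈ J := by
  induction x using DirectSum.Decomposition.inductionOn 𝒜 with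
  | zero => exact ⟨0, by simp⟩
  | @homogeneous i x =>
    rcases lt_trichotomy i 0 with hi | rfl | hi
    · have hx : (x : R) = 0 := by simpa [h𝒜.eq_bot_of_neg i hi] using x.2
      exact ⟨0, by simp [hx]⟩
    · obtain ⟨c, hc⟩ := h𝒜.exists_algebraMap_eq x x.2
      exact ⟨c, by simp [hc]⟩
    · exact ⟨0, by simpa using hJ ⟨i, hi, x.2⟩⟩
  | add x y hx hy =>
    obtain ⟨a, ha⟩ := hx
    obtain ⟨b, hb⟩ := hy
    exact ⟨a + b, by rw [map_add, add_sub_add_comm]; exact J.add_mem ha hb⟩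

lemma IsConnectedGrading.isMaximal_of_subset (h𝒜 : IsConnectedGrading 𝒜) {Q : Ideal R}
    (hQ : Q ≠ ⊤) (h : positiveElements 𝒜 ⊆ Q) : Q.IsMaximal := by
  have := Ideal.Quotient.nontrivial_iff.2 hQ
  have hbij : Function.Bijective (algebraMap k (R ⧸ Q)) := by
    refine ⟨(algebraMap k (R ⧸ Q)).injective, fun y => ?_⟩
    obtain ⟨x, rfl⟩ := Ideal.Quotient.mk_surjective y
    obtain ⟨c, hc⟩ := h𝒜.exists_sub_algebraMap_mem h x
    exact ⟨c, (Ideal.Quotient.mk_eq_mk_iff_sub_mem x _).2 hc |>.symm⟩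
  exact Ideal.Quotient.maximal_of_isField Q
    ((RingEquiv.ofBijective _ hbij).symm.toMulEquiv.isField (Field.toIsField k))

lemma IsConnectedGrading.exists_ringKrullDim_quotient_sup_le [IsNoetherianRing R]
    (h𝒜 : IsConnectedGrading 𝒜) {d : ℕ} {𝔞 : Ideal R}
    (hd : ringKrullDim (R ⧸ 𝔞) ≤ (d + 1 : ℕ)) :
    ∃ x ∈ positiveElements 𝒜, ringKrullDim (R ⧸ (𝔞 ⊔ Ideal.span {x})) ≤ d := by
  classical
  obtain ⟨x, hx, hxS⟩ := exists_mem_positiveElements_forall_notMem (𝒜 := 𝒜)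
    (S := (𝔞.finite_minimalPrimes_of_isNoetherianRing R).toFinset.filter
      fun P => ¬ positiveElements 𝒜 ⊆ P)
    (fun P hP => ((Set.Finite.mem_toFinset _).1 (Finset.mem_filter.1 hP).1).1.1)
    fun P hP => (Finset.mem_filter.1 hP).2
  refine ⟨x, hx, ringKrullDim_quotient_sup_span_singleton_le hd fun Q hQ hQmax => hxS Q ?_⟩
  rw [Finset.mem_filter, Set.Finite.mem_toFinset]
  exact ⟨hQ, fun h => hQmax (h𝒜.isMaximal_of_subset hQ.1.1.ne_top h)⟩

theorem IsConnectedGrading.exists_parameters [Algebra.FiniteType k R]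
    (h𝒜 : IsConnectedGrading 𝒜) {d : ℕ} {𝔞 : Ideal R} (hd : ringKrullDim (R ⧸ 𝔞) ≤ d) :
    ∃ x : Fin d → R, (∀ i, x i ∈ positiveElements 𝒜) ∧
      Module.Finite k (R ⧸ (𝔞 ⊔ Ideal.span (Set.range x))) := by
  have : IsNoetherianRing R := Algebra.FiniteType.isNoetherianRing k R
  induction d generalizing 𝔞 with
  | zero =>
    refine ⟨Fin.elim0, fun i => i.elim0, ?_⟩
    rwa [Set.range_eq_empty, Ideal.span_empty, sup_bot_eq, Module.finite_iff_krullDimLE_zero,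
      Ring.krullDimLE_iff]
  | succ d ih =>
    obtain ⟨x, hx, hdx⟩ := h𝒜.exists_ringKrullDim_quotient_sup_le hd
    obtain ⟨y, hy, hfin⟩ := ih hdx
    refine ⟨Fin.cons x y, Fin.cases hx hy, ?_⟩
    rwa [Fin.range_cons, Ideal.span_insert, ← sup_assoc]

end ConnectedGrading

end Parameters

section GradingTransfer

section LinearMap

variable {ι k V W : Type*} [DecidableEq ι] [CommRing k] [AddCommGroup V] [Module k V]
  [AddCommGroup W] [Module k W] {𝒱 : ι → Submodule k V} [DirectSum.Decomposition 𝒱]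

lemma coe_decompose_sum_of_mem {s : Finset ι} {v : ι → V} (hv : ∀ i ∈ s, v i ∈ 𝒱 i) {i : ι}
    (hi : i ∈ s) : (DirectSum.decompose 𝒱 (∑ j ∈ s, v j) i : V) = v i := by
  rw [DirectSum.decompose_sum, DFinsupp.finsetSum_apply, AddSubmonoidClass.coe_finsetSum,
    Finset.sum_eq_single_of_mem i hi fun j hj hji => DirectSum.decompose_of_mem_ne 𝒱 (hv j hj) hji,
    DirectSum.decompose_of_mem_same 𝒱 (hv i hi)]

lemma isInternal_map {φ : V →ₗ[k] W} (hφ : Function.Surjective φ)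
    (hker : (LinearMap.ker φ).IsHomogeneous 𝒱) :
    DirectSum.IsInternal fun i => (𝒱 i).map φ := by
  refine DirectSum.isInternal_submodule_of_iSupIndep_of_iSup_eq_top ?_ ?_
  · rw [iSupIndep_iff_finsetSum_eq_zero_imp_eq_zero]
    intro s w hw hsum i hi
    choose! v hv hvw using hw
    have hmem : ∑ j ∈ s, v j ∈ LinearMap.ker φ := by
      rw [LinearMap.mem_ker, map_sum, Finset.sum_congr rfl hvw, hsum]
    have hvi := hker i hmem
    rwa [coe_decompose_sum_of_mem hv hi, LinearMap.mem_ker, hvw i hi] at hvi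
  · rw [← Submodule.map_iSup,
      (DirectSum.Decomposition.isInternal 𝒱).submodule_iSup_eq_top, Submodule.map_top,
      LinearMap.range_eq_top.2 hφ]

lemma isInternal_comap {φ : W →ₗ[k] V} (hφ : Function.Injective φ)
    (hrange : (LinearMap.range φ).IsHomogeneous 𝒱) :
    DirectSum.IsInternal fun i => (𝒱 i).comap φ := by
  classical
  refine DirectSum.isInternal_submodule_of_iSupIndep_of_iSup_eq_top ?_ ?_
  · rw [iSupIndep_iff_finsetSum_eq_zero_imp_eq_zero]
    intro s w hw hsum i hi
    have hφw := coe_decompose_sum_of_mem (v := fun j => φ (w j)) hw hi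
    rw [← map_sum, hsum, map_zero, DirectSum.decompose_zero, DirectSum.zero_apply,
      ZeroMemClass.coe_zero] at hφw
    exact hφ (hφw.symm.trans (map_zero φ).symm)
  · rw [eq_top_iff]
    intro x _
    choose y hy using fun i => hrange i (LinearMap.mem_range_self φ x)
    have hx : x = ∑ i ∈ (DirectSum.decompose 𝒱 (φ x)).support, y i := by
      apply hφ
      rw [map_sum]
      simp only [hy]
      exact (DirectSum.sum_support_decompose 𝒱 (φ x)).symm
    rw [hx]
    refine sum_mem fun i _ => Submodule.mem_iSup_of_mem i ?_
    rw [Submodule.mem_comap, hy]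
    exact SetLike.coe_mem _

end LinearMap

section Algebra

variable {k R S : Type*} [CommRing k] [CommRing R] [Algebra k R] [CommRing S] [Algebra k S]
  (𝒜 : ℤ → Submodule k R) [GradedAlgebra 𝒜]

/-- The grading induced on a quotient of a graded algebra by a homogeneous ideal. -/
abbrev gradedAlgebraMap {φ : R →ₐ[k] S} (hφ : Function.Surjective φ)
    (hker : (RingHom.ker φ).IsHomogeneous 𝒜) :
    GradedAlgebra fun i => (𝒜 i).map φ.toLinearMap where
  one_mem := ⟨1, SetLike.one_mem_graded 𝒜, map_one φ⟩
  mul_mem := by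
    rintro i j _ _ ⟨a, ha, rfl⟩ ⟨b, hb, rfl⟩
    exact ⟨a * b, SetLike.mul_mem_graded ha hb, map_mul φ a b⟩
  __ := (isInternal_map (φ := φ.toLinearMap) hφ hker).chooseDecomposition

/-- The grading induced on a homogeneous subalgebra of a graded algebra. -/
abbrev gradedAlgebraComap {φ : S →ₐ[k] R} (hφ : Function.Injective φ)
    (hrange : (LinearMap.range φ.toLinearMap).IsHomogeneous 𝒜) :
    GradedAlgebra fun i => (𝒜 i).comap φ.toLinearMap where
  one_mem := by simpa using SetLike.one_mem_graded 𝒜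
  mul_mem i j a b ha hb := by simpa using SetLike.mul_mem_graded (A := 𝒜) ha hb
  __ := (isInternal_comap (φ := φ.toLinearMap) hφ hrange).chooseDecomposition

end Algebra

end GradingTransfer

section Nakayama

variable {k R σ : Type*} [Field k] [CommRing R] [Algebra k R] {𝒜 : ℤ → Submodule k R}
  [GradedAlgebra 𝒜] {δ : σ → ℤ} {c : ℤ}

lemma decompose_mem_of_mem_span_range {x : σ → R} (hx : ∀ i, x i ∈ 𝒜 (δ i)) {N : Submodule k R}
    (hN : ∀ i, ∀ r ∈ N, r * x i ∈ N) {j : ℤ} (hj : ∀ i, 𝒜 (j - δ i) ≤ N) {z : R}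
    (hz : z ∈ Ideal.span (Set.range x)) : (DirectSum.decompose 𝒜 z j : R) ∈ N := by
  induction hz using Submodule.closure_induction with
  | zero => simp
  | add y z _ _ hy hz =>
    rw [DirectSum.decompose_add, DirectSum.add_apply, AddMemClass.coe_add]
    exact add_mem hy hz
  | smul_mem r y hy =>
    obtain ⟨i, rfl⟩ := hy
    rw [smul_eq_mul, ← sub_add_cancel j (δ i),
      DirectSum.coe_decompose_mul_add_of_right_mem 𝒜 (hx i)]
    exact hN i _ (hj i (SetLike.coe_mem _))

lemma eq_top_of_top_le_sup_span_range (h𝒜 : ∀ j < c, 𝒜 j = ⊥) (hδ : ∀ i, 0 < δ i) {x : σ → R}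
    (hx : ∀ i, x i ∈ 𝒜 (δ i)) {F N : Submodule k R} (hF : F.IsHomogeneous 𝒜) (hFN : F ≤ N)
    (hN : ∀ i, ∀ r ∈ N, r * x i ∈ N)
    (h : ⊤ ≤ F ⊔ (Ideal.span (Set.range x)).restrictScalars k) : N = ⊤ := by
  classical
  have hle (n : ℕ) : ∀ j < c + n, 𝒜 j ≤ N := by
    induction n with
    | zero => intro j hj; simp [h𝒜 j (by simpa using hj)]
    | succ n ih =>
      intro j hj v hv
      obtain ⟨u, hu, z, hz, rfl⟩ := Submodule.mem_sup.1 (h (Submodule.mem_top (x := v)))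
      rw [← DirectSum.decompose_of_mem_same 𝒜 hv, DirectSum.decompose_add, DirectSum.add_apply,
        AddMemClass.coe_add]
      refine add_mem (hFN (hF j hu)) (decompose_mem_of_mem_span_range hx hN (fun i => ?_) hz)
      have := hδ i
      push_cast at hj
      exact ih _ (by omega)
  refine (Submodule.eq_top_iff').2 fun v => ?_
  rw [← DirectSum.sum_support_decompose 𝒜 v]
  exact sum_mem fun j _ => hle (j - c + 1).toNat j (by omega) (SetLike.coe_mem _)

open MvPolynomial in
theorem moduleFinite_mvPolynomial [Algebra (MvPolynomial σ k) R]
    [IsScalarTower k (MvPolynomial σ k) R] (h𝒜 : ∀ j < c, 𝒜 j = ⊥) (hδ : ∀ i, 0 < δ i)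
    (hX : ∀ i, algebraMap (MvPolynomial σ k) R (X i) ∈ 𝒜 (δ i))
    (hfin : Module.Finite k
      (R ⧸ Ideal.span (Set.range fun i => algebraMap (MvPolynomial σ k) R (X i)))) :
    Module.Finite (MvPolynomial σ k) R := by
  set J := Ideal.span (Set.range fun i => algebraMap (MvPolynomial σ k) R (X i))
  obtain ⟨v, hv⟩ := exists_le_span_sup_of_relLength_ne_top (U := (⊤ : Submodule k R))
    (W := J.restrictScalars k) (by
      have : Module.Finite k (R ⧸ J.restrictScalars k) := hfin
      exact (relLength_top_left _).trans_ne (Module.length_ne_top))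
  classical
  obtain ⟨s, hs, hvs⟩ := exists_finset_homogeneous_span_le k 𝒜 (Finset.univ.image v)
  choose γ hγ using fun m : s => hs m m.2
  have hF := isHomogeneous_span_range hγ
  rw [Subtype.range_coe_subtype] at hF
  have hmul (i : σ) : ∀ r ∈ (Submodule.span (MvPolynomial σ k) (s : Set R)).restrictScalars k,
      r * algebraMap (MvPolynomial σ k) R (X i) ∈
        (Submodule.span (MvPolynomial σ k) (s : Set R)).restrictScalars k := fun r hr => by
    rw [mul_comm, ← Algebra.smul_def]
    exact Submodule.smul_mem (Submodule.span (MvPolynomial σ k) (s : Set R)) _ hr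
  have htop := eq_top_of_top_le_sup_span_range h𝒜 hδ hX hF
    (Submodule.span_le_restrictScalars _ _ _) hmul
    (hv.trans (sup_le_sup_right (by simpa using hvs) _))
  exact ⟨s, by simpa using htop⟩

end Nakayama

section BracketPow

lemma pow_mem_bracketPow {R : Type*} [CommRing R] {I : Ideal R} {x : R} (hx : x ∈ I) (q : ℕ) :
    x ^ q ∈ bracketPow I q :=
  Ideal.subset_span ⟨x, hx, rfl⟩

lemma pow_mem_bracketPow_succ {R : Type*} [CommRing R] {I : Ideal R} {p n : ℕ} [ExpChar R p]
    {x : R} (hx : x ∈ bracketPow I (p ^ n)) : x ^ p ∈ bracketPow I (p ^ (n + 1)) := by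
  suffices bracketPow I (p ^ n) ≤ (bracketPow I (p ^ (n + 1))).comap (frobenius R p) from this hx
  rw [bracketPow, Ideal.span_le]
  rintro _ ⟨y, hy, rfl⟩
  rw [SetLike.mem_coe, Ideal.mem_comap, frobenius_def, ← pow_mul, ← pow_succ]
  exact pow_mem_bracketPow hy _

lemma map_bracketPow {R S : Type*} [CommRing R] [CommRing S] {φ : R →+* S}
    (hφ : Function.Surjective φ) (I : Ideal R) (q : ℕ) :
    (bracketPow I q).map φ = bracketPow (I.map φ) q := by
  refine le_antisymm (Ideal.map_le_iff_le_comap.2 (Ideal.span_le.2 ?_)) (Ideal.span_le.2 ?_)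
  · rintro _ ⟨x, hx, rfl⟩
    rw [SetLike.mem_coe, Ideal.mem_comap, map_pow]
    exact pow_mem_bracketPow (Ideal.mem_map_of_mem φ hx) q
  · rintro _ ⟨_, hy, rfl⟩
    obtain ⟨x, hx, rfl⟩ := (Ideal.mem_map_iff_of_surjective φ hφ).1 hy
    have hxq := Ideal.mem_map_of_mem φ (pow_mem_bracketPow hx q)
    rwa [map_pow] at hxq

lemma map_comap_bracketPow {R S : Type*} [CommRing R] [CommRing S] {φ : R →+* S} {q : ℕ}
    (hφ : ∀ s : S, s ^ q ∈ φ.range) (I : Ideal S) :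
    ((bracketPow I q).comap φ).map φ = bracketPow I q := by
  refine le_antisymm Ideal.map_comap_le (Ideal.span_le.2 ?_)
  rintro _ ⟨s, hs, rfl⟩
  obtain ⟨r, hr : φ r = (fun x => x ^ q) s⟩ := hφ s
  rw [SetLike.mem_coe, ← hr]
  refine Ideal.mem_map_of_mem φ ?_
  rw [Ideal.mem_comap, hr]
  exact pow_mem_bracketPow hs q

lemma isHomogeneous_bracketPow {ι σ R : Type*} [DecidableEq ι] [AddMonoid ι] [CommRing R]
    [SetLike σ R] [AddSubmonoidClass σ R] {𝒜 : ι → σ} [GradedRing 𝒜] {p : ℕ} [ExpChar R p]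
    {I : Ideal R} (hI : I.IsHomogeneous 𝒜) (n : ℕ) : (bracketPow I (p ^ n)).IsHomogeneous 𝒜 := by
  obtain ⟨s, rfl⟩ := (Ideal.IsHomogeneous.iff_exists 𝒜 I).1 hI
  have hmap : bracketPow (Ideal.span (Subtype.val '' s)) (p ^ n) =
      (Ideal.span (Subtype.val '' s)).map (iterateFrobenius R p n) := rfl
  rw [hmap, Ideal.map_span]
  refine Ideal.homogeneous_span 𝒜 _ ?_
  rintro _ ⟨_, ⟨⟨x, i, hi⟩, -, rfl⟩, rfl⟩
  exact ⟨p ^ n • i, SetLike.pow_mem_graded (p ^ n) hi⟩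

/-- The subspace `I^{[q]} M` of `M`. -/
def bracketSubspace (k : Type*) {R : Type*} (M : Type*) [Field k] [CommRing R] [Algebra k R]
    [AddCommGroup M] [Module R M] [Module k M] [IsScalarTower k R M] (I : Ideal R) (q : ℕ) :
    Submodule k M :=
  (bracketPow I q • ⊤ : Submodule R M).restrictScalars k

lemma bracketSubspace_map {k R S M : Type*} [Field k] [CommRing R] [Algebra k R] [CommRing S]
    [Algebra k S] [Algebra R S] [AddCommGroup M] [Module R M] [Module S M] [Module k M]
    [IsScalarTower k R M] [IsScalarTower k S M] [IsScalarTower R S M]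
    (hsurj : Function.Surjective (algebraMap R S)) (I : Ideal R) (q : ℕ) :
    bracketSubspace k M (I.map (algebraMap R S)) q = bracketSubspace k M I q := by
  have h := Ideal.smul_restrictScalars (bracketPow I q) (⊤ : Submodule S M)
  rw [map_bracketPow hsurj, Submodule.restrictScalars_top] at h
  rw [bracketSubspace, bracketSubspace, ← h]
  rfl

end BracketPow

section PowSubalgebraGrading

open MvPolynomial

variable {k σ S : Type*} [Field k] [CommRing S] [Algebra k S] [Algebra (MvPolynomial σ k) S]
  [IsScalarTower k (MvPolynomial σ k) S] {𝒮 : ℤ → Submodule k S} [GradedAlgebra 𝒮] {δ : σ → ℤ}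

lemma algebraMap_mem_subsemiringClosure {B : Subalgebra (MvPolynomial σ k) S}
    (hX : ∀ i, algebraMap (MvPolynomial σ k) S (X i) ∈ 𝒮 (δ i)) (a : MvPolynomial σ k) :
    algebraMap (MvPolynomial σ k) S a ∈
      Subsemiring.closure {y | y ∈ B ∧ SetLike.IsHomogeneousElem 𝒮 y} := by
  induction a using MvPolynomial.induction_on with
  | C c =>
    refine Subsemiring.subset_closure ⟨B.algebraMap_mem _, 0, ?_⟩
    rw [← MvPolynomial.algebraMap_eq, ← IsScalarTower.algebraMap_apply]
    exact SetLike.algebraMap_mem_graded 𝒮 c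
  | add a b ha hb => rw [map_add]; exact add_mem ha hb
  | mul_X a i ha =>
    rw [map_mul]
    exact mul_mem ha (Subsemiring.subset_closure ⟨B.algebraMap_mem _, δ i, hX i⟩)

lemma isHomogeneous_powSubalgebra {p : ℕ} [ExpChar S p]
    (hX : ∀ i, algebraMap (MvPolynomial σ k) S (X i) ∈ 𝒮 (δ i)) (e : ℕ) :
    ((powSubalgebra (MvPolynomial σ k) S (p ^ e)).toSubmodule.restrictScalars k).IsHomogeneous
      𝒮 := by
  classical
  set B := powSubalgebra (MvPolynomial σ k) S (p ^ e)
  set T := {y | y ∈ B ∧ SetLike.IsHomogeneousElem 𝒮 y}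
  have hTB : Subsemiring.closure T ≤ B.toSubsemiring := Subsemiring.closure_le.2 fun y hy => hy.1
  have hBT (x : S) (hx : x ∈ B) : x ∈ Subsemiring.closure T := by
    induction hx using Algebra.adjoin_induction with
    | mem x hx =>
      obtain ⟨r, rfl⟩ := hx
      dsimp only
      rw [← DirectSum.sum_support_decompose 𝒮 r, sum_pow_char_pow]
      exact sum_mem fun i _ => Subsemiring.subset_closure ⟨pow_mem_powSubalgebra _ _ _,
        p ^ e • i, SetLike.pow_mem_graded (p ^ e) (SetLike.coe_mem _)⟩
    | algebraMap a => exact algebraMap_mem_subsemiringClosure hX a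
    | add x y _ _ hx hy => exact add_mem hx hy
    | mul x y _ _ hx hy => exact mul_mem hx hy
  have hT := IsHomogeneous.subsemiringClosure_of_isHomogeneousElem (𝒜 := 𝒮) (s := T)
    fun y hy => hy.2
  exact fun i x hx => hTB (hT i (hBT x hx))

end PowSubalgebraGrading

section Convergence

open MvPolynomial

section FiniteAlgebra

variable {k σ S : Type*} [Field k] [CommRing S] [Algebra k S] [Algebra (MvPolynomial σ k) S]
  {𝒮 : ℤ → Submodule k S} [GradedAlgebra 𝒮] {p : ℕ}

lemma isPFamily_bracketPow [Finite σ] [ExpChar S p] {I : Ideal S} (hI : I.IsHomogeneous 𝒮)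
    (hXI : ∀ i, algebraMap (MvPolynomial σ k) S (X i) ∈ I.radical) :
    IsPFamily σ 𝒮 p fun n => bracketPow I (p ^ n) where
  isHomogeneous := isHomogeneous_bracketPow hI
  pow_mem n b hb := pow_mem_bracketPow_succ hb
  exists_map_varPow_le := by
    choose c hc using hXI
    obtain ⟨C, hC⟩ := (Set.finite_range c).bddAbove
    refine ⟨C + 1, C.succ_pos, fun n => ?_⟩
    rw [varPow, Ideal.map_span, Ideal.span_le]
    rintro _ ⟨_, ⟨i, rfl⟩, rfl⟩
    dsimp only
    rw [map_pow, pow_mul]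
    exact pow_mem_bracketPow (I.pow_mem_of_pow_mem (hc i) ((hC ⟨i, rfl⟩).trans C.le_succ)) _

section Subalgebra

variable {B : Type*} [CommRing B] [Algebra k B] [Algebra (MvPolynomial σ k) B] [Algebra B S]
  [IsScalarTower (MvPolynomial σ k) B S] {ℬ : ℤ → Submodule k B} [GradedAlgebra ℬ]
  {𝔰 : ℕ → Ideal S}

lemma IsPFamily.comap (h𝔰 : IsPFamily σ 𝒮 p 𝔰) (hℬ : ∀ i, ∀ b ∈ ℬ i, algebraMap B S b ∈ 𝒮 i) :
    IsPFamily σ ℬ p fun n => (𝔰 n).comap (algebraMap B S) where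
  isHomogeneous n :=
    let φ : ℬ →+*ᵍ 𝒮 := { algebraMap B S with map_mem := hℬ _ _ }
    (HomogeneousIdeal.comap φ ⟨𝔰 n, h𝔰.isHomogeneous n⟩).is_homogeneous'
  pow_mem n b hb := by
    rw [Ideal.mem_comap, map_pow]
    exact h𝔰.pow_mem n _ hb
  exists_map_varPow_le := by
    obtain ⟨c, hc, h⟩ := h𝔰.exists_map_varPow_le
    refine ⟨c, hc, fun n => ?_⟩
    rw [← Ideal.map_le_iff_le_comap, Ideal.map_map, ← IsScalarTower.algebraMap_eq]
    exact h n

variable {M : Type*} [AddCommGroup M] [Module k M] [Module S M] [IsScalarTower k S M]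
  [Module B M] [IsScalarTower B S M] [IsScalarTower k B M] [Module (MvPolynomial σ k) M]
  [IsScalarTower (MvPolynomial σ k) B M] [IsScalarTower k (MvPolynomial σ k) M]
  [Module.Finite (MvPolynomial σ k) M] [Module.Finite (MvPolynomial σ k) B]
  [IsScalarTower k (MvPolynomial σ k) B] {ℳ : ℤ → Submodule k M}
  [DirectSum.Decomposition ℳ] [SetLike.GradedSMul ℬ ℳ]

theorem IsPFamily.exists_tendsto_normSum_of_comap [Fintype σ] [Fact p.Prime] [CharP B p]
    [CharP k p] {δ : σ → ℤ} {f : MvPolynomial σ k}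
    (h𝔰 : IsPFamily σ 𝒮 p 𝔰) (hℬ : ∀ i, ∀ b ∈ ℬ i, algebraMap B S b ∈ 𝒮 i)
    (hX : ∀ i, algebraMap (MvPolynomial σ k) B (X i) ∈ ℬ (δ i)) (hf : f ≠ 0)
    (hfB : ∀ b : B, f • b ∈ powSpan p (⊤ : Submodule (MvPolynomial σ k) B))
    (hmap : ∀ᶠ n in atTop, ((𝔰 n).comap (algebraMap B S)).map (algebraMap B S) = 𝔰 n) :
    ∃ F, Tendsto (normSum p (Fintype.card σ) fun n =>
      hilbertFun ℳ ⊤ ((𝔰 n • ⊤ : Submodule S M).restrictScalars k)) atTop (nhds F) := by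
  obtain ⟨F, hF⟩ := (h𝔰.comap hℬ).exists_tendsto_normSum_hilbertFunSeq_top (V := M) (ℳ := ℳ)
    hX hf hfB
  refine ⟨F, hF.congr' (hmap.mono fun n hn => ?_)⟩
  have hsmul := Ideal.smul_restrictScalars ((𝔰 n).comap (algebraMap B S)) (⊤ : Submodule S M)
  rw [hn, Submodule.restrictScalars_top] at hsmul
  rw [normSum, normSum, hilbertFunSeq, ← hsmul]
  rfl

end Subalgebra

variable [IsScalarTower k (MvPolynomial σ k) S]

theorem exists_tendsto_normSum_bracketPow [Fintype σ] [Fact p.Prime] [CharP S p]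
    [Module.Finite (MvPolynomial σ k) S] {δ : σ → ℤ} {I : Ideal S}
    (hX : ∀ i, algebraMap (MvPolynomial σ k) S (X i) ∈ 𝒮 (δ i))
    (hI : I.IsHomogeneous 𝒮) (hXI : ∀ i, algebraMap (MvPolynomial σ k) S (X i) ∈ I.radical)
    {M : Type*} [AddCommGroup M] [Module k M] [Module S M] [IsScalarTower k S M]
    [Module.Finite S M] {ℳ : ℤ → Submodule k M} [DirectSum.Decomposition ℳ]
    [SetLike.GradedSMul 𝒮 ℳ] :
    (∀ n, relLength ⊤ (bracketSubspace k M I (p ^ n)) ≠ ⊤) ∧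
      ∃ F, Tendsto (normSum p (Fintype.card σ) fun n =>
        hilbertFun ℳ ⊤ (bracketSubspace k M I (p ^ n))) atTop (nhds F) := by
  have hchar : CharP k p := by
    have := CharP.nontrivial_of_char_ne_one (R := S) (Fact.out : p.Prime).ne_one
    exact (algebraMap k S).charP (algebraMap k S).injective p
  let := Module.compHom M (algebraMap (MvPolynomial σ k) S)
  have : IsScalarTower (MvPolynomial σ k) S M := .of_algebraMap_smul fun _ _ => rfl
  have : IsScalarTower k (MvPolynomial σ k) M := .to₁₂₄ k (MvPolynomial σ k) S M
  have : Module.Finite (MvPolynomial σ k) M := .trans S M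
  obtain ⟨e, f, hf, hfB⟩ := exists_smul_mem_powSpan_powSubalgebra (MvPolynomial σ k) S p
  set B := powSubalgebra (MvPolynomial σ k) S (p ^ e)
  have : Module.Finite (MvPolynomial σ k) B := .of_fg (IsNoetherian.noetherian B.toSubmodule)
  have : CharP B p := (algebraMap B S).charP Subtype.val_injective p
  let φ : B →ₐ[k] S := B.val.restrictScalars k
  have hrange : (LinearMap.range φ.toLinearMap).IsHomogeneous 𝒮 := by
    have : LinearMap.range φ.toLinearMap = B.toSubmodule.restrictScalars k :=
      SetLike.coe_injective Subtype.range_coe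
    rw [this]
    exact isHomogeneous_powSubalgebra hX e
  let := gradedAlgebraComap 𝒮 (φ := φ) Subtype.val_injective hrange
  have : SetLike.GradedSMul (fun i => (𝒮 i).comap φ.toLinearMap) ℳ :=
    ⟨fun i _ b m hb hm => (SetLike.GradedSMul.smul_mem (A := 𝒮) hb hm : (b : S) • m ∈ _)⟩
  have hfam := isPFamily_bracketPow (p := p) hI hXI
  refine ⟨hfam.relLength_smul_ne_top ⊤, hfam.exists_tendsto_normSum_of_comap
    (ℬ := fun i => (𝒮 i).comap φ.toLinearMap) (fun _ _ hb => hb) hX hf hfB ?_⟩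
  filter_upwards [eventually_ge_atTop e] with n hn
  refine map_comap_bracketPow (fun s => ?_) I
  rw [← Nat.sub_add_cancel hn, pow_add, pow_mul]
  exact ⟨⟨_, pow_mem_powSubalgebra _ _ (s ^ p ^ (n - e))⟩, rfl⟩

end FiniteAlgebra

section Graded

variable {k R M : Type*} [Field k] [CommRing R] [Algebra k R] {𝒜 : ℤ → Submodule k R}
  [GradedAlgebra 𝒜] [AddCommGroup M] [Module k M] [Module R M]

lemma isHomogeneous_annihilator (ℳ : ℤ → Submodule k M) [DirectSum.Decomposition ℳ]
    [SetLike.GradedSMul 𝒜 ℳ] : (Module.annihilator R M).IsHomogeneous 𝒜 := by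
  intro i r hr
  rw [Module.mem_annihilator] at hr ⊢
  intro m
  classical
  rw [← DirectSum.sum_support_decompose ℳ m, Finset.smul_sum]
  refine Finset.sum_eq_zero fun j _ => ?_
  rw [← coe_decompose_smul_of_mem 𝒜 (SetLike.coe_mem _), hr, DirectSum.decompose_zero]
  rfl

section Connected

variable [IsScalarTower k R M] {ℳ : ℤ → Submodule k M} [DirectSum.Decomposition ℳ]
  [SetLike.GradedSMul 𝒜 ℳ] [Algebra.FiniteType k R] [Module.Finite R M] {p d : ℕ}
  [Fact p.Prime] [CharP R p] {I : Ideal R}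

lemma IsConnectedGrading.exists_tendsto_normSum_of_ringKrullDim_le (h𝒜 : IsConnectedGrading 𝒜)
    (hd : ringKrullDim R ≤ d) (hI : I.IsHomogeneous 𝒜) (hpos : positiveElements 𝒜 ⊆ I.radical) :
    (∀ n, relLength ⊤ (bracketSubspace k M I (p ^ n)) ≠ ⊤) ∧
      ∃ F, Tendsto (normSum p d fun n => hilbertFun ℳ ⊤ (bracketSubspace k M I (p ^ n)))
        atTop (nhds F) := by
  obtain ⟨x, hx, hfin⟩ := h𝒜.exists_parameters ((ringKrullDim_quotient_le ⊥).trans hd)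
  choose δ hδ hxδ using id hx
  let := (aeval x : MvPolynomial (Fin d) k →ₐ[k] R).toAlgebra
  have : IsScalarTower k (MvPolynomial (Fin d) k) R := .of_algHom (aeval x)
  have hX : (fun i => algebraMap (MvPolynomial (Fin d) k) R (X i)) = x := funext (aeval_X x)
  rw [bot_sup_eq, ← hX] at hfin
  have : Module.Finite (MvPolynomial (Fin d) k) R :=
    moduleFinite_mvPolynomial (𝒜 := 𝒜) (δ := δ) (c := 0) h𝒜.eq_bot_of_neg hδ
      (fun i => congrFun hX i ▸ hxδ i) hfin
  have h := exists_tendsto_normSum_bracketPow (ℳ := ℳ) (p := p)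
    (fun i => congrFun hX i ▸ hxδ i) hI fun i => congrFun hX i ▸ hpos (hx i)
  rwa [Fintype.card_fin] at h

omit [GradedAlgebra 𝒜] [Algebra.FiniteType k R] in
lemma IsConnectedGrading.map {S : Type*} [CommRing S] [Algebra k S] (h𝒜 : IsConnectedGrading 𝒜)
    (φ : R →ₐ[k] S) : IsConnectedGrading fun i => (𝒜 i).map φ.toLinearMap where
  eq_bot_of_neg t ht := by rw [h𝒜.eq_bot_of_neg t ht, Submodule.map_bot]
  exists_algebraMap_eq := by
    rintro _ ⟨x, hx, rfl⟩
    obtain ⟨c, rfl⟩ := h𝒜.exists_algebraMap_eq x hx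
    exact ⟨c, (φ.commutes c).symm⟩

omit [CharP R p] in
lemma IsConnectedGrading.exists_tendsto_normSum_of_surjective {S : Type*} [CommRing S]
    [Algebra k S] [Algebra R S] [IsScalarTower k R S] [Module S M] [IsScalarTower R S M]
    [CharP S p] (h𝒜 : IsConnectedGrading 𝒜) (hsurj : Function.Surjective (algebraMap R S))
    (hker : (RingHom.ker (algebraMap R S)).IsHomogeneous 𝒜) (hd : ringKrullDim S ≤ d)
    (hI : I.IsHomogeneous 𝒜) (hpos : positiveElements 𝒜 ⊆ I.radical) :
    (∀ n, relLength ⊤ (bracketSubspace k M I (p ^ n)) ≠ ⊤) ∧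
      ∃ F, Tendsto (normSum p d fun n => hilbertFun ℳ ⊤ (bracketSubspace k M I (p ^ n)))
        atTop (nhds F) := by
  let φ := IsScalarTower.toAlgHom k R S
  let 𝒮 := fun i => (𝒜 i).map φ.toLinearMap
  let : GradedAlgebra 𝒮 := gradedAlgebraMap 𝒜 (φ := φ) hsurj hker
  have : IsScalarTower k S M := .of_algebraMap_smul fun c m => by
    rw [IsScalarTower.algebraMap_apply k R S, algebraMap_smul, algebraMap_smul]
  have : Module.Finite S M := .of_restrictScalars_finite R S M
  have : Algebra.FiniteType k S := .of_surjective φ hsurj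
  have : SetLike.GradedSMul 𝒮 ℳ := ⟨by
    rintro i j _ m ⟨r, hr, rfl⟩ hm
    exact (algebraMap_smul S r m).symm ▸ SetLike.GradedSMul.smul_mem (A := 𝒜) hr hm⟩
  let f : 𝒜 →+*ᵍ 𝒮 := ⟨algebraMap R S, Submodule.mem_map_of_mem⟩
  have hpos' : positiveElements 𝒮 ⊆ (I.map (algebraMap R S)).radical := by
    rintro _ ⟨t, ht, r, hr, rfl⟩
    exact Ideal.map_radical_le _ (Ideal.mem_map_of_mem _ (hpos ⟨t, ht, hr⟩))
  have h := (h𝒜.map φ).exists_tendsto_normSum_of_ringKrullDim_le (M := M) (ℳ := ℳ) (p := p)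
    (I := I.map (algebraMap R S)) hd (HomogeneousIdeal.map f ⟨I, hI⟩).isHomogeneous hpos'
  simpa only [bracketSubspace_map hsurj] using h

theorem IsConnectedGrading.exists_tendsto_normSum (h𝒜 : IsConnectedGrading 𝒜)
    (hd : ringKrullDim (R ⧸ Module.annihilator R M) ≤ d) (hI : I.IsHomogeneous 𝒜)
    (hpos : positiveElements 𝒜 ⊆ I.radical) :
    (∀ n, relLength ⊤ (bracketSubspace k M I (p ^ n)) ≠ ⊤) ∧
      ∃ F, Tendsto (normSum p d fun n => hilbertFun ℳ ⊤ (bracketSubspace k M I (p ^ n)))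
        atTop (nhds F) := by
  obtain hM | hM := subsingleton_or_nontrivial M
  · have hle (n : ℕ) : ⊤ ≤ bracketSubspace k M I (p ^ n) := (Subsingleton.elim _ _).le
    refine ⟨fun n => by simp [relLength_eq_zero_iff.2 (hle n)], 0, ?_⟩
    rw [funext fun n => hilbertFun_eq_zero (hle n)]
    exact tendsto_const_nhds.congr fun n => (congrFun (normSum_zero p d) n).symm
  have := Module.nontrivial R M
  have : Nontrivial (R ⧸ Module.annihilator R M) := Ideal.Quotient.nontrivial_iff.2 <|
    mt Module.annihilator_eq_top_iff.1 (not_subsingleton M)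
  have : CharP k p := (algebraMap k R).charP (algebraMap k R).injective p
  have : CharP (R ⧸ Module.annihilator R M) p :=
    charP_of_injective_algebraMap (algebraMap k _).injective p
  let : Module (R ⧸ Module.annihilator R M) M := Module.quotientAnnihilator
  have : IsScalarTower R (R ⧸ Module.annihilator R M) M := .of_algebraMap_smul fun _ _ => rfl
  refine h𝒜.exists_tendsto_normSum_of_surjective Ideal.Quotient.mk_surjective ?_ hd hI hpos
  exact (Ideal.mk_ker (I := Module.annihilator R M)).symm ▸ isHomogeneous_annihilator ℳ

end Connected

end Graded

end Convergence

section FrobeniusPoincare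

section Ring

variable {k R : Type*} [Field k] [CommRing R] [Algebra k R] {𝒜 : ℤ → Submodule k R}
  [GradedAlgebra 𝒜]

lemma positiveElements_subset_radical (h𝒜 : ∀ t < 0, 𝒜 t = ⊥) {I : Ideal R}
    (hI : I.IsHomogeneous 𝒜) [IsArtinian R (R ⧸ I)] : positiveElements 𝒜 ⊆ I.radical := by
  rintro x ⟨t, ht, hx⟩
  obtain ⟨n, y, hy⟩ := IsArtinian.exists_pow_succ_smul_dvd x (1 : R ⧸ I)
  obtain ⟨r, rfl⟩ := Ideal.Quotient.mk_surjective y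
  refine ⟨n, ?_⟩
  have hmem : x ^ (n + 1) * r - x ^ n ∈ I := by
    rw [← Ideal.Quotient.eq_zero_iff_mem, map_sub, sub_eq_zero]
    simpa [Algebra.smul_def] using hy
  have hr : (DirectSum.decompose 𝒜 r (-t) : R) = 0 := by
    simpa [h𝒜 (-t) (by lia)] using (DirectSum.decompose 𝒜 r (-t)).2
  have hproj := hI (n • t) hmem
  rw [DirectSum.decompose_sub, DirectSum.sub_apply, AddSubgroupClass.coe_sub,
    DirectSum.decompose_of_mem_same 𝒜 (SetLike.pow_mem_graded n hx),
    show n • t = (n + 1) • t + -t by rw [succ_nsmul, add_neg_cancel_right],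
    DirectSum.coe_decompose_mul_add_of_left_mem 𝒜 (SetLike.pow_mem_graded (n + 1) hx), hr,
    mul_zero, zero_sub, neg_mem_iff] at hproj
  exact hproj

end Ring

section Module

variable {k R M : Type*} [Field k] [CommRing R] [Algebra k R] [AddCommGroup M] [Module R M]
  [Module k M] [IsScalarTower k R M] (ℳ : ℤ → Submodule k M)

lemma quotPieceDim_eq_toNat_relLength (N : Submodule R M) (j : ℤ) :
    quotPieceDim k ℳ N j = (relLength (ℳ j) (N.restrictScalars k)).toNat := by
  have hmap : (ℳ j).map (N.mkQ.restrictScalars k) =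
      ((ℳ j).map (N.restrictScalars k).mkQ).map
        (Submodule.Quotient.restrictScalarsEquiv k N).toLinearMap := by
    rw [← Submodule.map_comp]
    rfl
  rw [quotPieceDim, hmap, LinearEquiv.finrank_map_eq, relLength, Module.length_eq_rank]
  simp [Module.finrank]

variable {ℳ} {p d : ℕ}

lemma FnGen_eq_normSum [DirectSum.Decomposition ℳ] {I : Ideal R} (n : ℕ)
    (hW : (bracketSubspace k M I (p ^ n)).IsHomogeneous ℳ)
    (hfin : relLength ⊤ (bracketSubspace k M I (p ^ n)) ≠ ⊤) (y : ℂ) :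
    FnGen k ℳ I p d n y =
      normSum p d (fun n => hilbertFun ℳ ⊤ (bracketSubspace k M I (p ^ n))) n y := by
  have hdim (j : ℤ) : quotPieceDim k ℳ (bracketPow I (p ^ n) • ⊤ : Submodule R M) j =
      hilbertFun ℳ ⊤ (bracketSubspace k M I (p ^ n)) j := by
    rw [quotPieceDim_eq_toNat_relLength, ← bracketSubspace, ← top_inf_eq (ℳ j),
      ← coe_hilbertFun_apply hW hfin, ENat.toNat_natCast]
  rw [FnGen, normSum, ContinuousMap.smul_apply, expSum_apply, smul_eq_mul,
    tsum_eq_sum fun j hj => by rw [hdim, Finsupp.notMem_support_iff.1 hj, Nat.cast_zero, zero_mul]]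
  simp [hdim]

end Module

lemma differentiable_normSum (p d : ℕ) (h : ℕ → ℤ →₀ ℕ) (n : ℕ) :
    Differentiable ℂ (normSum p d h n) := by
  have heq : ⇑(normSum p d h n) = fun y => (1 / (p : ℂ) ^ n) ^ d *
      ∑ j ∈ (h n).support, h n j * exp (-I * y * j / (p ^ n : ℕ)) :=
    funext fun y => by rw [normSum, ContinuousMap.smul_apply, expSum_apply, smul_eq_mul]
  rw [heq]
  fun_prop

lemma differentiable_of_tendsto {F : ℕ → C(ℂ, ℂ)} {f : C(ℂ, ℂ)}
    (hF : Tendsto F atTop (nhds f)) (hdiff : ∀ n, Differentiable ℂ (F n)) :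
    Differentiable ℂ f := by
  rw [ContinuousMap.tendsto_iff_forall_isCompact_tendstoUniformlyOn] at hF
  have hloc : TendstoLocallyUniformlyOn (fun n => ⇑(F n)) f atTop Set.univ :=
    (tendstoLocallyUniformlyOn_iff_forall_isCompact isOpen_univ).2 fun K _ hK => hF K hK
  exact differentiableOn_univ.1 <| hloc.differentiableOn
    (.of_forall fun n => (hdiff n).differentiableOn) isOpen_univ

theorem frobenius_poincare_exists_general
    {k R M : Type*} [Field k] [CommRing R] [Algebra k R] [Algebra.FiniteType k R]
    {p : ℕ} (hp : p.Prime) [CharP R p]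
    {𝒜 : ℤ → Submodule k R} [GradedAlgebra 𝒜] (h𝒜 : IsConnectedGrading 𝒜)
    {I : Ideal R} (hI : I.IsHomogeneous 𝒜) (hIfl : IsFiniteLength R (R ⧸ I))
    [AddCommGroup M] [Module R M] [Module k M] [IsScalarTower k R M] [Module.Finite R M]
    (ℳ : ℤ → Submodule k M) [DirectSum.Decomposition ℳ] [SetLike.GradedSMul 𝒜 ℳ]
    {d : ℕ} (hd : ringKrullDim (R ⧸ Module.annihilator R M) ≤ d) :
    ∃ F : ℂ → ℂ,
      (∀ y : ℂ, Tendsto (fun n => FnGen k ℳ I p d n y) atTop (nhds (F y))) ∧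
      (∀ K : Set ℂ, IsCompact K →
        TendstoUniformlyOn (fun n y => FnGen k ℳ I p d n y) F atTop K) ∧
      Differentiable ℂ F := by
  have : Fact p.Prime := ⟨hp⟩
  have : IsArtinian R (R ⧸ I) := (isFiniteLength_iff_isNoetherian_isArtinian.1 hIfl).2
  obtain ⟨hfin, F, hF⟩ := h𝒜.exists_tendsto_normSum (ℳ := ℳ) (p := p) hd hI
    (positiveElements_subset_radical h𝒜.eq_bot_of_neg hI)
  have hW (n : ℕ) : (bracketSubspace k M I (p ^ n)).IsHomogeneous ℳ :=
    isHomogeneous_smul (isHomogeneous_bracketPow hI n) fun _ _ _ => Submodule.mem_top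
  have heq : (fun n y => FnGen k ℳ I p d n y) = fun n => ⇑(normSum p d _ n) :=
    funext₂ fun n y => FnGen_eq_normSum n (hW n) (hfin n) y
  have hunif := ContinuousMap.tendsto_iff_forall_isCompact_tendstoUniformlyOn.1 hF
  rw [← heq] at hunif
  exact ⟨F, fun y => (hunif {y} isCompact_singleton).tendsto_at rfl, hunif,
    differentiable_of_tendsto hF fun n => differentiable_normSum p d _ n⟩

end FrobeniusPoincare

/-- **Existence of Frobenius–Poincaré functions.**  For a triple `(M,R,I)` where `R` is a
finitely generated `ℕ`-graded algebra over a field `k` of characteristic `p > 0` with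
`R₀ = k`, `I` is a homogeneous ideal with `R/I` of finite length, and `M` is a finitely
generated `ℤ`-graded `R`-module of Krull dimension `dM`, the sequence of functions
`F_n(M,R,I,dim M)` converges at every complex number `y`, uniformly on every compact
subset of `ℂ`, and the limit is an entire function. -/
theorem frobenius_poincare_exists
    (k R M : Type) [Field k] [CommRing R] [Algebra k R] [Algebra.FiniteType k R]
    (p : ℕ) (hp : p.Prime) [CharP R p]
    (𝒜 : ℤ → Submodule k R) [GradedAlgebra 𝒜]
    (h𝒜neg : ∀ t : ℤ, t < 0 → 𝒜 t = ⊥)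
    (h𝒜zero : ∀ x ∈ 𝒜 0, ∃ c : k, algebraMap k R c = x)
    (I : Ideal R) (hI : Ideal.IsHomogeneous 𝒜 I) (hIfl : IsFiniteLength R (R ⧸ I))
    [AddCommGroup M] [Module R M] [Module k M] [IsScalarTower k R M] [Module.Finite R M]
    (ℳ : ℤ → Submodule k M) [DirectSum.Decomposition ℳ]
    (hℳ : ∀ (a b : ℤ), ∀ r ∈ 𝒜 a, ∀ x ∈ ℳ b, r • x ∈ ℳ (a + b))
    (dM : ℕ) (hdM : ringKrullDim (R ⧸ Module.annihilator R M) = dM) :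
    ∃ F : ℂ → ℂ,
      (∀ y : ℂ, Tendsto (fun n : ℕ => FnGen k ℳ I p dM n y) atTop (nhds (F y))) ∧
      (∀ K : Set ℂ, IsCompact K →
        TendstoUniformlyOn (fun n : ℕ => fun y : ℂ => FnGen k ℳ I p dM n y) F atTop K) ∧
      Differentiable ℂ F := by
  have : SetLike.GradedSMul 𝒜 ℳ := ⟨fun _ _ _ _ hr hx => hℳ _ _ _ hr _ hx⟩
  exact frobenius_poincare_exists_general hp ⟨h𝒜neg, h𝒜zero⟩ hI hIfl ℳ hdM.le

end
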